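/- arXiv:1203.1795 — 3 statements merged into one kernel-verified Lean document; each statement's English description precedes it below -/
import Mathlib

section
/- Let j > 0, K ≥ 1 an integer, α ∈ (1/2,1) the unique solution of α + j·α^K = j + 1/2, and ρ*(r) = j·(1−α^K)·r + 1/2. Then for every t ≥ 0 and every r ∈ [−1,1], ρ*(r) = ∫_{−1}^{1} P_t(r, r′)·ρ*(r′) dr′ + (j/2)·(1 − α^K)·∫_0^t [P_s(r, 1) − P_s(r, −1)] ds. In particular ρ* is a stationary solution of the macroscopic integral equation. -/
open MeasureTheory

/-- The Gaussian heat kernel on the real line. -/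
noncomputable def G (t r r' : ℝ) : ℝ :=
  Real.exp (-(r - r') ^ 2 / (2 * t)) / Real.sqrt (2 * Real.pi * t)

/-- The Neumann heat kernel on `[-1,1]`, obtained from the Gaussian kernel by
the reflection map: for `r' ∈ (-1,1)`,
`P t r r' = ∑_{n∈ℤ} [G t r (r'+4n) + G t r (2−r'+4n)]`, while at the boundary
`P t r (±1) = ∑_{n∈ℤ} 2·G t r (±1+4n)`. -/
noncomputable def P (t r r' : ℝ) : ℝ :=
  if r' = 1 ∨ r' = -1 then ∑' n : ℤ, 2 * G t r (r' + 4 * n)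
  else ∑' n : ℤ, (G t r (r' + 4 * n) + G t r (2 - r' + 4 * n))


open Real in
/-- Eigenvalues of the Neumann operator. -/
noncomputable def lamN (n : ℕ) : ℝ := π ^ 2 * ((n : ℝ) + 1) ^ 2 / 8

lemma lamN_pos (n : ℕ) : 0 < lamN n := by
  unfold lamN; have := Real.pi_pos; positivity

open Real in
/-- Poisson summation for the periodized Gaussian. -/
lemma hasSum_G (t : ℝ) (ht : 0 < t) (r x : ℝ) :
    ∃ S : ℝ, HasSum (fun n : ℤ => G t r (x + 4 * n)) S ∧
      HasSum (fun n : ℕ => 1 / 2 * cos (π * ((n : ℝ) + 1) * (x - r) / 2) * exp (-lamN n * t))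
        (S - 1 / 4) := by
  have hpi := Real.pi_pos
  have hτ : 0 < 8 / (π * t) := by positivity
  have h1 := HurwitzZeta.hasSum_int_evenKernel ((x - r) / 4) hτ
  have hτ' : 0 < 1 / (8 / (π * t)) := by positivity
  have h2 := HurwitzZeta.hasSum_nat_cosKernel₀ ((x - r) / 4) hτ'
  have hf := HurwitzZeta.evenKernel_functional_equation (((x - r) / 4 : ℝ) : UnitAddCircle)
    (8 / (π * t))
  refine ⟨HurwitzZeta.evenKernel (((x - r) / 4 : ℝ) : UnitAddCircle) (8 / (π * t)) /
    Real.sqrt (2 * π * t), ?_, ?_⟩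
  · convert! h1.div_const (Real.sqrt (2 * π * t)) using 2 with n
    unfold G
    congr 2
    field_simp
    ring
  · have hs : Real.sqrt (8 / (π * t)) * Real.sqrt (2 * π * t) = 4 := by
      rw [← Real.sqrt_mul hτ.le]
      have : 8 / (π * t) * (2 * π * t) = 4 ^ 2 := by field_simp; norm_num
      rw [this, Real.sqrt_sq (by norm_num)]
    have hS : HurwitzZeta.evenKernel (((x - r) / 4 : ℝ) : UnitAddCircle) (8 / (π * t)) /
        Real.sqrt (2 * π * t) - 1 / 4 =
        1 / 4 * (HurwitzZeta.cosKernel (((x - r) / 4 : ℝ) : UnitAddCircle)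
          (1 / (8 / (π * t))) - 1) := by
      rw [hf, ← Real.sqrt_eq_rpow]
      have : ∀ C : ℝ, 1 / Real.sqrt (8 / (π * t)) * C / Real.sqrt (2 * π * t) = C / 4 := by
        intro C
        rw [← hs]
        have a1 : 0 < Real.sqrt (8 / (π * t)) := Real.sqrt_pos.2 hτ
        have a2 : 0 < Real.sqrt (2 * π * t) := Real.sqrt_pos.2 (by positivity)
        generalize Real.sqrt (8 / (π * t)) = u at *
        generalize Real.sqrt (2 * π * t) = v at *
        field_simp
      rw [this]; ring
    rw [hS]
    convert! h2.mul_left (1 / 4) using 2 with n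
    have e1 : π * ((n : ℝ) + 1) * (x - r) / 2 = 2 * π * ((x - r) / 4) * (n + 1) := by ring
    have e2 : -lamN n * t = -π * (n + 1) ^ 2 * (1 / (8 / (π * t))) := by
      unfold lamN; field_simp
    rw [e1, e2]; ring

open Real in
lemma hasSum_P_int (t : ℝ) (ht : 0 < t) (r x : ℝ) (hx : x ≠ 1) (hx' : x ≠ -1) :
    HasSum (fun n : ℕ => 1 / 2 * (cos (π * ((n : ℝ) + 1) * (x - r) / 2)
      + cos (π * ((n : ℝ) + 1) * (2 - x - r) / 2)) * exp (-lamN n * t)) (P t r x - 1 / 2) := by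
  obtain ⟨S, h1, h2⟩ := hasSum_G t ht r x
  obtain ⟨S', h1', h2'⟩ := hasSum_G t ht r (2 - x)
  have : P t r x = S + S' := by
    unfold P
    rw [if_neg (by simp [hx, hx'])]
    exact (h1.add h1').tsum_eq
  rw [this]
  convert! h2.add h2' using 1
  · ext n; ring
  · ring

open Real in
lemma hasSum_P_bd (t : ℝ) (ht : 0 < t) (r x : ℝ) (hx : x = 1 ∨ x = -1) :
    HasSum (fun n : ℕ => cos (π * ((n : ℝ) + 1) * (x - r) / 2) * exp (-lamN n * t))
      (P t r x - 1 / 2) := by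
  obtain ⟨S, h1, h2⟩ := hasSum_G t ht r x
  have : P t r x = 2 * S := by
    unfold P
    rw [if_pos hx]
    exact (h1.mul_left 2).tsum_eq
  rw [this]
  convert! h2.mul_left 2 using 1
  · ext n; ring
  · ring

/-- Fourier coefficients of the boundary flux. -/
noncomputable def dN (r : ℝ) (n : ℕ) : ℝ :=
  Real.cos (Real.pi * ((n : ℝ) + 1) * (1 - r) / 2)
    - Real.cos (Real.pi * ((n : ℝ) + 1) * (-1 - r) / 2)

lemma abs_dN_le (r : ℝ) (n : ℕ) : |dN r n| ≤ 2 := by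
  unfold dN
  have a := Real.abs_cos_le_one (Real.pi * ((n : ℝ) + 1) * (1 - r) / 2)
  have b := Real.abs_cos_le_one (Real.pi * ((n : ℝ) + 1) * (-1 - r) / 2)
  rw [abs_le] at *
  constructor <;> linarith [a.1, a.2, b.1, b.2]

lemma summable_inv_lamN : Summable (fun n : ℕ => 1 / lamN n) := by
  have h : Summable (fun n : ℕ => 1 / (n : ℝ) ^ 2) :=
    Real.summable_one_div_nat_pow.2 (by norm_num)
  have h2 := ((summable_nat_add_iff 1).2 h).mul_left (8 / Real.pi ^ 2)
  refine h2.congr fun n => ?_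
  have := Real.pi_pos
  unfold lamN
  push_cast
  field_simp

lemma summable_exp_lamN (t : ℝ) (ht : 0 < t) : Summable (fun n : ℕ => Real.exp (-lamN n * t)) := by
  refine Summable.of_nonneg_of_le (fun n => (Real.exp_pos _).le) (fun n => ?_)
    (summable_inv_lamN.mul_left (1 / t))
  have h := lamN_pos n
  have h3 := Real.add_one_le_exp (lamN n * t)
  rw [neg_mul, Real.exp_neg, ← one_div, one_div_mul_one_div]
  apply one_div_le_one_div_of_le (by positivity)
  linarith [mul_comm t (lamN n)]

lemma integral_exp_lamN (t : ℝ) (n : ℕ) :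
    ∫ s in (0 : ℝ)..t, Real.exp (-lamN n * s) = (1 - Real.exp (-lamN n * t)) / lamN n := by
  have h := lamN_pos n
  have := intervalIntegral.integral_eq_sub_of_hasDerivAt (a := 0) (b := t)
    (f := fun s => -Real.exp (-lamN n * s) / lamN n) (f' := fun s => Real.exp (-lamN n * s))
    (fun s _ => by
      have h1 : HasDerivAt (fun s : ℝ => -lamN n * s) (-lamN n) s := by
        simpa using (hasDerivAt_id s).const_mul (-lamN n)
      convert! (h1.exp.neg.div_const (lamN n)) using 1
      field_simp)
    (Continuous.intervalIntegrable (by fun_prop) _ _)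
  rw [this]
  simp
  ring

lemma hasSum_time (t : ℝ) (ht : 0 < t) (r : ℝ) :
    HasSum (fun n : ℕ => dN r n * ((1 - Real.exp (-lamN n * t)) / lamN n))
      (∫ s in (0 : ℝ)..t, (P s r 1 - P s r (-1))) := by
  have key := hasSum_integral_of_summable_integral_norm
    (μ := volume.restrict (Set.Ioc (0 : ℝ) t))
    (F := fun (n : ℕ) (s : ℝ) => dN r n * Real.exp (-lamN n * s))
    (fun n => by
      have : IntervalIntegrable (fun s : ℝ => dN r n * Real.exp (-lamN n * s)) volume 0 t :=
        Continuous.intervalIntegrable (by fun_prop) _ _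
      exact (intervalIntegrable_iff_integrableOn_Ioc_of_le ht.le).1 this)
    (by
      refine Summable.of_nonneg_of_le (fun n => integral_nonneg fun _ => norm_nonneg _)
        (fun n => ?_) (summable_inv_lamN.mul_left 2)
      have : ∀ s : ℝ, ‖dN r n * Real.exp (-lamN n * s)‖ = |dN r n| * Real.exp (-lamN n * s) := by
        intro s
        rw [norm_mul, Real.norm_eq_abs, Real.norm_eq_abs, abs_of_pos (Real.exp_pos _)]
      simp_rw [this]
      rw [← intervalIntegral.integral_of_le ht.le, intervalIntegral.integral_const_mul,
        integral_exp_lamN]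
      have hl := lamN_pos n
      gcongr
      · apply div_nonneg _ hl.le
        have : Real.exp (-lamN n * t) ≤ 1 := Real.exp_le_one_iff.2 (by nlinarith)
        linarith
      · exact abs_dN_le r n
      · linarith [Real.exp_pos (-lamN n * t)])
  convert! key using 1
  · ext n
    rw [← intervalIntegral.integral_of_le ht.le, intervalIntegral.integral_const_mul,
        integral_exp_lamN]
  · rw [intervalIntegral.integral_of_le ht.le]
    refine setIntegral_congr_fun measurableSet_Ioc fun s hs => ?_
    have h := (hasSum_P_bd s hs.1 r 1 (Or.inl rfl)).sub (hasSum_P_bd s hs.1 r (-1) (Or.inr rfl))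
    have e : P s r 1 - 1 / 2 - (P s r (-1) - 1 / 2) = P s r 1 - P s r (-1) := by ring
    rw [e] at h
    rw [← h.tsum_eq]
    congr 1
    ext n
    unfold dN
    ring

open Real in
lemma integral_mode (c r : ℝ) (n : ℕ) :
    ∫ x in (-1 : ℝ)..1, (cos (π * ((n : ℝ) + 1) * (x - r) / 2)
      + cos (π * ((n : ℝ) + 1) * (2 - x - r) / 2)) * (c * x + 1 / 2) = c * (dN r n / lamN n) := by
  have hpi := Real.pi_pos
  set w : ℝ := π * ((n : ℝ) + 1) / 2 with hw
  have hw0 : 0 < w := by positivity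
  have e1 : ∀ y : ℝ, π * ((n : ℝ) + 1) * y / 2 = w * y := fun y => by rw [hw]; ring
  have hl : lamN n = w ^ 2 / 2 := by unfold lamN; rw [hw]; ring
  unfold dN
  simp_rw [e1, hl]
  have := intervalIntegral.integral_eq_sub_of_hasDerivAt (a := -1) (b := 1)
    (f := fun x => (c * x + 1 / 2) * (sin (w * (x - r)) - sin (w * (2 - x - r))) / w
      + c * (cos (w * (x - r)) + cos (w * (2 - x - r))) / w ^ 2)
    (f' := fun x => (cos (w * (x - r)) + cos (w * (2 - x - r))) * (c * x + 1 / 2))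
    (fun x _ => by
      have h1 : HasDerivAt (fun x : ℝ => w * (x - r)) w x := by
        simpa using ((hasDerivAt_id x).sub_const r).const_mul w
      have h2 : HasDerivAt (fun x : ℝ => w * (2 - x - r)) (-w) x := by
        simpa using (((hasDerivAt_id x).const_sub 2).sub_const r).const_mul w
      have h3 : HasDerivAt (fun x : ℝ => c * x + 1 / 2) c x := by
        simpa using ((hasDerivAt_id x).const_mul c).add_const (1 / 2)
      convert! ((h3.mul (h1.sin.sub h2.sin)).div_const w).add
        (((h1.cos.add h2.cos).const_mul c).div_const (w ^ 2)) using 1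
      simp only [Pi.sub_apply]
      field_simp
      ring)
    (Continuous.intervalIntegrable (by fun_prop) _ _)
  rw [this]
  have p1 : w * (2 - -1 - r) = w * (-1 - r) + ((n + 1 : ℕ) : ℝ) * (2 * π) := by
    rw [hw]; push_cast; ring
  have p2 : w * (2 - 1 - r) = w * (1 - r) := by ring
  simp only [p1, p2, sin_add_nat_mul_two_pi, cos_add_nat_mul_two_pi]
  field_simp
  ring

lemma hasSum_space (c t : ℝ) (ht : 0 < t) (r : ℝ) :
    HasSum (fun n : ℕ => 1 / 2 * Real.exp (-lamN n * t) * (c * (dN r n / lamN n)))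
      ((∫ x in (-1 : ℝ)..1, P t r x * (c * x + 1 / 2)) - 1 / 2) := by
  have hae : ∀ᵐ x : ℝ, x ≠ 1 ∧ x ≠ -1 := by
    have h1 : ∀ᵐ x : ℝ, x ≠ 1 := Measure.ae_ne volume 1
    have h2 : ∀ᵐ x : ℝ, x ≠ -1 := Measure.ae_ne volume (-1)
    filter_upwards [h1, h2] with x a b using ⟨a, b⟩
  set F : ℕ → ℝ → ℝ := fun n x => 1 / 2 * Real.exp (-lamN n * t) *
    ((Real.cos (Real.pi * ((n : ℝ) + 1) * (x - r) / 2)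
      + Real.cos (Real.pi * ((n : ℝ) + 1) * (2 - x - r) / 2)) * (c * x + 1 / 2)) with hF
  have hcont : ∀ n, Continuous (F n) := fun n => by rw [hF]; fun_prop
  have hbd : ∀ n, ∀ x ∈ Set.Ioc (-1 : ℝ) 1, ‖F n x‖ ≤ Real.exp (-lamN n * t) * (|c| + 1 / 2) := by
    intro n x hx
    have a := Real.abs_cos_le_one (Real.pi * ((n : ℝ) + 1) * (x - r) / 2)
    have b := Real.abs_cos_le_one (Real.pi * ((n : ℝ) + 1) * (2 - x - r) / 2)
    have hs := abs_add_le (Real.cos (Real.pi * ((n : ℝ) + 1) * (x - r) / 2))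
      (Real.cos (Real.pi * ((n : ℝ) + 1) * (2 - x - r) / 2))
    have hxa : |x| ≤ 1 := abs_le.2 ⟨hx.1.le, hx.2⟩
    have hl : |c * x + 1 / 2| ≤ |c| + 1 / 2 := by
      calc |c * x + 1 / 2| ≤ |c * x| + |1 / 2| := abs_add_le _ _
        _ = |c| * |x| + 1 / 2 := by rw [abs_mul]; norm_num
        _ ≤ |c| + 1 / 2 := by nlinarith [abs_nonneg c]
    rw [hF]
    simp only [norm_mul, Real.norm_eq_abs, Real.abs_exp]
    have h12 : |(1 / 2 : ℝ)| = 1 / 2 := by norm_num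
    rw [h12]
    calc _ ≤ 1 / 2 * Real.exp (-lamN n * t) * (2 * (|c| + 1 / 2)) := by
          gcongr
          linarith
      _ = _ := by ring
  have hsum : Summable fun n : ℕ => Real.exp (-lamN n * t) * (|c| + 1 / 2) :=
    (summable_exp_lamN t ht).mul_right _
  have key := intervalIntegral.hasSum_integral_of_dominated_convergence (μ := volume)
    (a := -1) (b := 1) (F := F)
    (f := fun x => (P t r x - 1 / 2) * (c * x + 1 / 2))
    (fun n _ => Real.exp (-lamN n * t) * (|c| + 1 / 2))
    (fun n => (hcont n).aestronglyMeasurable)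
    (fun n => Filter.Eventually.of_forall fun x hx => hbd n x (by
      rwa [Set.uIoc_of_le (by norm_num)] at hx))
    (Filter.Eventually.of_forall fun x _ => hsum)
    (by simp)
    (by
      filter_upwards [hae] with x hx _
      convert! (hasSum_P_int t ht r x hx.1 hx.2).mul_right (c * x + 1 / 2) using 1
      ext n
      rw [hF]; ring)
  have hint : IntervalIntegrable (fun x => (P t r x - 1 / 2) * (c * x + 1 / 2)) volume (-1) 1 := by
    have hcF : ContinuousOn (fun x => ∑' n, F n x) (Set.Icc (-1 : ℝ) 1) := by
      refine continuousOn_tsum (u := fun n => Real.exp (-lamN n * t) * (|c| + 1 / 2))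
        (fun n => (hcont n).continuousOn) hsum ?_
      intro n x hx
      have hc : IsClosed {x : ℝ | ‖F n x‖ ≤ Real.exp (-lamN n * t) * (|c| + 1 / 2)} :=
        isClosed_le (hcont n).norm continuous_const
      have := hc.closure_subset_iff.2 (fun x hx => hbd n x hx)
      rw [closure_Ioc (by norm_num)] at this
      exact this hx
    have hi := (hcF.intervalIntegrable_of_Icc (μ := volume) (by norm_num))
    refine hi.congr_ae (ae_restrict_of_ae ?_)
    filter_upwards [hae] with x hx
    rw [← ((hasSum_P_int t ht r x hx.1 hx.2).mul_right (c * x + 1 / 2)).tsum_eq]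
    congr 1
    ext n
    rw [hF]; ring
  convert! key using 1
  · ext n
    rw [hF]
    simp only
    rw [intervalIntegral.integral_const_mul, integral_mode]
  · have e : ∀ x, P t r x * (c * x + 1 / 2) =
      (P t r x - 1 / 2) * (c * x + 1 / 2) + (c / 2 * x + 1 / 4) := fun x => by ring
    simp_rw [e]
    rw [intervalIntegral.integral_add hint (Continuous.intervalIntegrable (by fun_prop) _ _),
      intervalIntegral.integral_add (Continuous.intervalIntegrable (by fun_prop) _ _)
      (Continuous.intervalIntegrable (by fun_prop) _ _), intervalIntegral.integral_const_mul,
      integral_id, intervalIntegral.integral_const]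
    norm_num

lemma hasSum_linear (r : ℝ) (hr : r ∈ Set.Icc (-1 : ℝ) 1) :
    HasSum (fun n : ℕ => dN r n / lamN n) (2 * r) := by
  have hpi := Real.pi_pos
  have B : ∀ x : ℝ, (Polynomial.map (algebraMap ℚ ℝ) (Polynomial.bernoulli (2 * 1))).eval x
      = x ^ 2 - x + 1 / 6 := by
    intro x
    simp [Polynomial.bernoulli, Finset.sum_range_succ, bernoulli_two, bernoulli_one]
    ring
  have hA : ∀ x ∈ Set.Icc (0 : ℝ) 1,
      HasSum (fun n : ℕ => 1 / ((n : ℝ) + 1) ^ 2 * Real.cos (2 * Real.pi * ((n : ℝ) + 1) * x))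
        (Real.pi ^ 2 * (x ^ 2 - x + 1 / 6)) := by
    intro x hx
    have h := hasSum_one_div_nat_pow_mul_cos (k := 1) one_ne_zero hx
    rw [B, ← hasSum_nat_add_iff' 1] at h
    convert! h using 1
    · ext n; push_cast; ring
    · simp [Nat.factorial]; ring_nf; simp
  have h1 := hA ((1 - r) / 4) ⟨by linarith [hr.2], by linarith [hr.1]⟩
  have h2 := hA ((1 + r) / 4) ⟨by linarith [hr.1], by linarith [hr.2]⟩
  convert! (h1.sub h2).mul_left (8 / Real.pi ^ 2) using 1
  · ext n
    unfold dN lamN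
    have a : Real.pi * ((n : ℝ) + 1) * (1 - r) / 2 = 2 * Real.pi * (n + 1) * ((1 - r) / 4) := by
      ring
    have b : Real.pi * ((n : ℝ) + 1) * (-1 - r) / 2
      = -(2 * Real.pi * (n + 1) * ((1 + r) / 4)) := by ring
    rw [a, b, Real.cos_neg]
    field_simp
  · field_simp
    ring

/-- The linear profile `ρ*(r) = j·(1−α^K)·r + 1/2`, with `α ∈ (1/2,1)` the unique
solution of `α + j·α^K = j + 1/2`, is a stationary solution of the macroscopic
integral equation: for every `t > 0` and `r ∈ [−1,1]`,
`ρ*(r) = ∫_{−1}^{1} P_t(r,r')·ρ*(r') dr' + (j/2)·(1−α^K)·∫_0^t [P_s(r,1) − P_s(r,−1)] ds`. -/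
theorem stationary_profile_solves (j : ℝ) (hj : 0 < j) (K : ℕ) (hK : 1 ≤ K)
    (α : ℝ) (hα : α ∈ Set.Ioo (1 / 2 : ℝ) 1) (hαeq : α + j * α ^ K = j + 1 / 2)
    (t : ℝ) (ht : 0 < t) (r : ℝ) (hr : r ∈ Set.Icc (-1 : ℝ) 1) :
    j * (1 - α ^ K) * r + 1 / 2
      = (∫ r' in (-1 : ℝ)..1, P t r r' * (j * (1 - α ^ K) * r' + 1 / 2))
        + j / 2 * (1 - α ^ K) * ∫ s in (0 : ℝ)..t, (P s r 1 - P s r (-1)) := by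
  have h1 := hasSum_space (j * (1 - α ^ K)) t ht r
  have h2 := (hasSum_time t ht r).mul_left (j / 2 * (1 - α ^ K))
  have h3 := (hasSum_linear r hr).mul_left (j / 2 * (1 - α ^ K))
  have h4 := h1.add h2
  have e : (fun n : ℕ => 1 / 2 * Real.exp (-lamN n * t) * (j * (1 - α ^ K) * (dN r n / lamN n))
      + j / 2 * (1 - α ^ K) * (dN r n * ((1 - Real.exp (-lamN n * t)) / lamN n)))
      = fun n : ℕ => j / 2 * (1 - α ^ K) * (dN r n / lamN n) := by
    ext n
    ring
  rw [e] at h4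
  have h5 := h3.unique h4
  linarith
end

section
/- Let j > 0, K ≥ 1 an integer, and T > 0. Given a continuous ρ₀ : [−1,1] → [0,1], there exists exactly one pair of continuous functions (u₊, u₋) : [0,T] → [0,1]² satisfying, for all t ∈ [0,T], u_±(t) = ∫_{−1}^{1} P_t(±1, r)·ρ₀(r) dr + (j/2)·∫_0^t { P_s(±1, 1)·(1 − u₊(t−s)^K) − P_s(±1, −1)·(1 − (1 − u₋(t−s))^K) } ds. -/
open MeasureTheory

open ProbabilityTheory Filter Topology

namespace BSW

noncomputable def gk (s y : ℝ) : ℝ := Real.exp (-y ^ 2 / (2 * s)) / Real.sqrt (2 * Real.pi * s)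

noncomputable def pk (s x : ℝ) : ℝ := ∑' n : ℤ, 2 * gk s (x - 4 * n)

noncomputable def HH (φ : ℝ → ℝ) (t x : ℝ) : ℝ := ∫ z, φ (x + √t * z) ∂(gaussianReal 0 1)

lemma gk_nonneg (s y : ℝ) : 0 ≤ gk s y := by unfold gk; positivity

lemma gk_of_nonpos {s : ℝ} (hs : s ≤ 0) (y : ℝ) : gk s y = 0 := by
  unfold gk
  rw [Real.sqrt_eq_zero_of_nonpos, div_zero]
  have := Real.pi_pos
  nlinarith

lemma gk_measurable : Measurable (fun p : ℝ × ℝ => gk p.1 p.2) := by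
  unfold gk
  fun_prop

lemma gk_continuous (s : ℝ) : Continuous (gk s) := by
  unfold gk
  fun_prop

lemma two_sqrt_le {s : ℝ} (hs : 0 ≤ s) : 2 * √s ≤ √(2 * Real.pi * s) := by
  apply Real.le_sqrt_of_sq_le
  rw [mul_pow, Real.sq_sqrt hs]
  have := Real.pi_gt_three
  nlinarith

lemma gk_le_inv {s : ℝ} (hs : 0 < s) (y : ℝ) : gk s y ≤ (√s)⁻¹ := by
  unfold gk
  have h1 : Real.exp (-y ^ 2 / (2 * s)) ≤ 1 := by
    rw [Real.exp_le_one_iff]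
    apply div_nonpos_of_nonpos_of_nonneg
    · nlinarith [sq_nonneg y]
    · positivity
  have h2 := two_sqrt_le hs.le
  have h3 : 0 < √s := Real.sqrt_pos.2 hs
  rw [← one_div]
  apply div_le_div₀ zero_le_one h1 h3
  linarith

lemma gk_le_sq {s : ℝ} (hs : 0 < s) {y : ℝ} (hy : y ≠ 0) : gk s y ≤ √s / y ^ 2 := by
  unfold gk
  have hy2 : 0 < y ^ 2 := by positivity
  have h1 : Real.exp (-y ^ 2 / (2 * s)) ≤ 2 * s / y ^ 2 := by
    have := Real.add_one_le_exp (y ^ 2 / (2 * s))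
    have h5 : 0 < y ^ 2 / (2 * s) := by positivity
    rw [neg_div, Real.exp_neg]
    calc (Real.exp (y ^ 2 / (2 * s)))⁻¹ ≤ (y ^ 2 / (2 * s))⁻¹ := by
          apply inv_anti₀ h5; linarith
      _ = _ := by rw [inv_div]
  have h2 := two_sqrt_le hs.le
  have h3 : 0 < √s := Real.sqrt_pos.2 hs
  rw [div_le_iff₀ (by linarith)]
  refine h1.trans ?_
  rw [div_mul_eq_mul_div]
  apply div_le_div_of_nonneg_right _ hy2.le
  nlinarith [Real.mul_self_sqrt hs.le]

lemma summable_exp_int {c : ℝ} (hc : 0 < c) : Summable (fun n : ℤ => Real.exp (-(c * (n:ℝ) ^ 2))) := by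
  have h : Summable (fun n : ℤ => c⁻¹ * (1 / (n:ℝ) ^ 2)) :=
    (Real.summable_one_div_int_pow.2 (by norm_num)).mul_left _
  refine Summable.of_norm_bounded_eventually h ?_
  have : ∀ᶠ n : ℤ in cofinite, n ≠ 0 := by
    rw [Filter.eventually_cofinite]
    simp
  filter_upwards [this] with n hn
  have hn2 : 0 < (n:ℝ) ^ 2 := by positivity
  rw [Real.norm_of_nonneg (Real.exp_nonneg _), Real.exp_neg, ← one_div, ← one_div,
    one_div_mul_one_div]
  apply one_div_le_one_div_of_le (by positivity)
  have := Real.add_one_le_exp (c * (n:ℝ) ^ 2)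
  linarith

lemma gk_le_exp {s : ℝ} (hs : 0 < s) {R x : ℝ} (hx : |x| ≤ R) (n : ℤ) :
    gk s (x - 4 * n) ≤ ((√s)⁻¹ * Real.exp (R ^ 2 / (2 * s))) * Real.exp (-(4 / s * (n:ℝ) ^ 2)) := by
  unfold gk
  have h2 := two_sqrt_le hs.le
  have h3 : 0 < √s := Real.sqrt_pos.2 hs
  rw [mul_assoc (√s)⁻¹, ← Real.exp_add, div_eq_mul_inv, mul_comm]
  apply mul_le_mul
  · apply inv_anti₀ h3; linarith
  · rw [Real.exp_le_exp]
    have : R ^ 2 / (2 * s) + -(4 / s * (n:ℝ) ^ 2) = (R ^ 2 - 8 * n ^ 2) / (2 * s) := by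
      field_simp; ring
    rw [this]
    apply div_le_div_of_nonneg_right _ (by positivity)
    have hx2 : x ^ 2 ≤ R ^ 2 := sq_le_sq' (by linarith [neg_abs_le x]) (by linarith [le_abs_self x])
    nlinarith [sq_nonneg (2 * x - 4 * (n:ℝ))]
  · positivity
  · positivity

lemma gk_summable (s x : ℝ) : Summable (fun n : ℤ => 2 * gk s (x - 4 * n)) := by
  apply Summable.mul_left
  rcases le_or_gt s 0 with hs | hs
  · simp [gk_of_nonpos hs, summable_zero]
  · refine Summable.of_nonneg_of_le (fun n => gk_nonneg _ _) (fun n => gk_le_exp hs le_rfl n) ?_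
    exact (summable_exp_int (by positivity)).mul_left _

lemma pk_nonneg (s x : ℝ) : 0 ≤ pk s x :=
  tsum_nonneg fun n => mul_nonneg zero_le_two (gk_nonneg _ _)

lemma pk_of_nonpos {s : ℝ} (hs : s ≤ 0) (x : ℝ) : pk s x = 0 := by
  simp [pk, gk_of_nonpos hs]

lemma pk_continuous (s : ℝ) : Continuous (pk s) := by
  rcases le_or_gt s 0 with hs | hs
  · have : pk s = fun _ => 0 := funext fun x => pk_of_nonpos hs x
    rw [this]; exact continuous_const
  rw [continuous_iff_continuousAt]
  intro x
  have hc : ContinuousOn (pk s) (Metric.ball x 1) := by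
    unfold pk
    refine continuousOn_tsum (u := fun n : ℤ => 2 * (((√s)⁻¹ * Real.exp ((|x| + 1) ^ 2 / (2 * s))) *
      Real.exp (-(4 / s * (n:ℝ) ^ 2)))) ?_ ?_ ?_
    · intro n
      have := gk_continuous s
      fun_prop
    · exact ((summable_exp_int (by positivity)).mul_left _).mul_left _
    · intro n y hy
      rw [Real.norm_of_nonneg (mul_nonneg zero_le_two (gk_nonneg _ _))]
      apply mul_le_mul_of_nonneg_left _ zero_le_two
      apply gk_le_exp hs
      rw [Metric.mem_ball, Real.dist_eq] at hy
      have := abs_add_le (y - x) x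
      rw [sub_add_cancel] at this
      linarith
  exact hc.continuousAt (Metric.ball_mem_nhds x one_pos)

lemma pk_measurable : Measurable (fun p : ℝ × ℝ => pk p.1 p.2) := by
  refine measurable_of_tendsto_metrizable' (atTop : Filter (Finset ℤ))
    (f := fun (F : Finset ℤ) (p : ℝ × ℝ) => ∑ n ∈ F, 2 * gk p.1 (p.2 - 4 * (n:ℝ))) ?_ ?_
  · intro F
    refine Finset.measurable_sum _ fun n _ => ?_
    exact (gk_measurable.comp (by fun_prop : Measurable fun p : ℝ × ℝ => (p.1, p.2 - 4 * (n:ℝ)))).const_mul 2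
  · rw [tendsto_pi_nhds]
    intro p
    exact (gk_summable p.1 p.2).hasSum

lemma pk_periodic (s x : ℝ) (m : ℤ) : pk s (x + 4 * m) = pk s x := by
  unfold pk
  rw [← (Equiv.addRight m).tsum_eq]
  refine tsum_congr fun n => ?_
  simp only [Equiv.coe_addRight]
  push_cast
  congr 2; ring

lemma pk_bound (T : ℝ) (hT : 0 < T) : ∃ C : ℝ, 0 < C ∧ ∀ s, s ≤ T → ∀ x, pk s x ≤ C * (√s)⁻¹ := by
  let c : ℤ → ℝ := fun n => T * (1 / (n:ℝ) ^ 2) + (if n = 0 then 1 else 0)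
  have hc0 : ∀ n, 0 ≤ c n := by
    intro n
    simp only [c]
    split_ifs <;> positivity
  have hc : Summable c := by
    apply Summable.add
    · exact (Real.summable_one_div_int_pow.2 (by norm_num)).mul_left _
    · exact (hasSum_ite_eq (0:ℤ) (1:ℝ)).summable
  have hcs : 0 ≤ ∑' n, c n := tsum_nonneg hc0
  refine ⟨2 * ∑' n, c n + 1, by positivity, ?_⟩
  intro s hsT x
  rcases le_or_gt s 0 with hs | hs
  · rw [pk_of_nonpos hs]
    positivity
  have h3 : 0 < √s := Real.sqrt_pos.2 hs
  have key : ∀ x : ℝ, |x| ≤ 2 → pk s x ≤ (2 * ∑' n, c n) * (√s)⁻¹ := by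
    intro x hx
    have e : (2 * ∑' n, c n) * (√s)⁻¹ = ∑' n, (2 * (√s)⁻¹) * c n := by
      rw [tsum_mul_left]; ring
    rw [e]
    unfold pk
    refine Summable.tsum_le_tsum ?_ (gk_summable s x) (hc.mul_left _)
    intro n
    rw [mul_assoc]
    apply mul_le_mul_of_nonneg_left _ zero_le_two
    by_cases hn : n = 0
    · subst hn
      simp only [c]
      simp
      exact gk_le_inv hs _
    · have hn1 : (1:ℝ) ≤ |(n:ℝ)| := by exact_mod_cast Int.one_le_abs hn
      have h4 : |(n:ℝ)| ≤ |x - 4 * n| := by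
        have h5 := abs_sub_abs_le_abs_sub (4 * (n:ℝ)) x
        rw [abs_sub_comm, abs_mul] at h5
        norm_num at h5
        linarith
      have h6 : x - 4 * n ≠ 0 := by
        intro h; rw [h] at h4; simp at h4; simp [h4] at hn1; linarith
      have h7 : (n:ℝ) ^ 2 ≤ (x - 4 * n) ^ 2 := sq_le_sq.2 h4
      refine (gk_le_sq hs h6).trans ?_
      simp only [c, hn, if_false, add_zero]
      have hn2 : 0 < (n:ℝ) ^ 2 := by positivity
      calc √s / (x - 4 * n) ^ 2 ≤ √s / (n:ℝ) ^ 2 := by gcongr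
        _ = (√s)⁻¹ * (s * (1 / (n:ℝ) ^ 2)) := by
            field_simp
            rw [Real.sq_sqrt hs.le]
        _ ≤ _ := by gcongr
  have hm : |x - 4 * (round (x / 4) : ℤ)| ≤ 2 := by
    have := abs_sub_round (x / 4)
    rw [abs_le] at this ⊢
    constructor <;> linarith [this.1, this.2]
  have := key _ hm
  have h8 := pk_periodic s (x - 4 * (round (x / 4) : ℤ)) (round (x / 4))
  rw [sub_add_cancel] at h8
  rw [h8]
  refine this.trans ?_
  gcongr
  linarith

lemma pk_small {x : ℝ} (hx : ∀ n : ℤ, x ≠ 4 * n) {ε : ℝ} (hε : 0 < ε) :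
    ∃ h0 > 0, ∀ s, s ≤ h0 → pk s x ≤ ε := by
  have hsum : Summable (fun n : ℤ => 1 / (x - 4 * n) ^ 2) := by
    have := ((Real.summable_one_div_int_add_rpow (-(x/4)) 2).2 (by norm_num)).mul_left (1/16)
    refine this.congr fun n => ?_
    rw [Real.rpow_two, sq_abs]
    have h1 : x - 4 * n ≠ 0 := sub_ne_zero.2 (hx n)
    have h2 : (n:ℝ) + -(x/4) ≠ 0 := by intro h; apply h1; linarith
    field_simp
    ring
  set S := ∑' n : ℤ, 1 / (x - 4 * n) ^ 2 with hS
  have hS0 : 0 ≤ S := tsum_nonneg fun n => by positivity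
  refine ⟨(ε / (2 * (S + 1))) ^ 2, by positivity, fun s hs => ?_⟩
  rcases le_or_gt s 0 with hs0 | hs0
  · rw [pk_of_nonpos hs0]; exact hε.le
  have h1 : √s ≤ ε / (2 * (S + 1)) := Real.sqrt_le_iff.2 ⟨by positivity, hs⟩
  have h2 : pk s x ≤ 2 * √s * S := by
    rw [hS, ← tsum_mul_left]
    unfold pk
    refine Summable.tsum_le_tsum ?_ (gk_summable s x) (hsum.mul_left _)
    intro n
    have := gk_le_sq hs0 (sub_ne_zero.2 (hx n))
    rw [mul_assoc, mul_one_div]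
    linarith
  refine h2.trans ?_
  rw [le_div_iff₀ (by positivity)] at h1
  nlinarith [Real.sqrt_nonneg s]

lemma gauss_integral_eq (f : ℝ → ℝ) :
    ∫ z, f z ∂(gaussianReal 0 1) = ∫ z, (√(2 * Real.pi))⁻¹ * Real.exp (-z ^ 2 / 2) * f z := by
  rw [integral_gaussianReal_eq_integral_smul one_ne_zero]
  simp [gaussianPDFReal]

lemma gk_conv {s h : ℝ} (hs : 0 < s) (hh : 0 ≤ h) (y : ℝ) :
    ∫ z, gk s (y + √h * z) ∂(gaussianReal 0 1) = gk (s + h) y := by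
  rw [gauss_integral_eq]
  have hsh : 0 < s + h := by linarith
  have hpi := Real.pi_pos
  have e : ∀ z : ℝ, (√(2 * Real.pi))⁻¹ * Real.exp (-z ^ 2 / 2) * gk s (y + √h * z) =
      ((√(2 * Real.pi))⁻¹ * (√(2 * Real.pi * s))⁻¹ * Real.exp (-y ^ 2 / (2 * (s + h)))) *
      Real.exp (-((s + h) / (2 * s)) * (z + y * √h / (s + h)) ^ 2) := by
    intro z
    unfold gk
    rw [div_eq_mul_inv]
    have : Real.exp (-z ^ 2 / 2) * Real.exp (-(y + √h * z) ^ 2 / (2 * s)) =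
      Real.exp (-y ^ 2 / (2 * (s + h))) * Real.exp (-((s + h) / (2 * s)) * (z + y * √h / (s + h)) ^ 2) := by
      rw [← Real.exp_add, ← Real.exp_add]
      congr 1
      have h2 := Real.sq_sqrt hh
      generalize √h = a at *
      subst h2
      field_simp
      ring
    calc _ = (√(2 * Real.pi))⁻¹ * (√(2 * Real.pi * s))⁻¹ * (Real.exp (-z ^ 2 / 2) * Real.exp (-(y + √h * z) ^ 2 / (2 * s))) := by ring
      _ = _ := by rw [this]; ring
  simp_rw [e]
  rw [integral_const_mul, integral_add_right_eq_self (fun z => Real.exp (-((s + h) / (2 * s)) * z ^ 2)), integral_gaussian]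
  unfold gk
  have : (√(2 * Real.pi))⁻¹ * (√(2 * Real.pi * s))⁻¹ * √(Real.pi / ((s + h) / (2 * s))) = (√(2 * Real.pi * (s + h)))⁻¹ := by
    rw [← Real.sqrt_inv, ← Real.sqrt_inv, ← Real.sqrt_inv, ← Real.sqrt_mul (by positivity), ← Real.sqrt_mul (by positivity)]
    congr 1
    field_simp
  rw [div_eq_mul_inv (Real.exp (-y ^ 2 / (2 * (s + h)))) (√(2 * Real.pi * (s + h))), ← this]
  ring

lemma gk_comp_integrable {s : ℝ} (hs : 0 < s) (h y : ℝ) :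
    Integrable (fun z => gk s (y + h * z)) (gaussianReal 0 1) := by
  refine Integrable.mono' (integrable_const ((√s)⁻¹)) ?_ ?_
  · have := gk_continuous s
    exact (by fun_prop : Continuous fun z => gk s (y + h * z)).aestronglyMeasurable
  · refine Eventually.of_forall fun z => ?_
    rw [Real.norm_of_nonneg (gk_nonneg _ _)]
    exact gk_le_inv hs _

lemma HH_pk {s h : ℝ} (hs : 0 < s) (hh : 0 ≤ h) (c x : ℝ) :
    HH (fun y => pk s (y - c)) h x = pk (s + h) (x - c) := by
  have e : ∀ n : ℤ, ∀ z, 2 * gk s (x + √h * z - c - 4 * n) = 2 * gk s ((x - c - 4 * n) + √h * z) := by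
    intro n z; congr 2; ring
  have hgi : ∀ n : ℤ, ∫ z, 2 * gk s (x + √h * z - c - 4 * n) ∂(gaussianReal 0 1) = 2 * gk (s + h) (x - c - 4 * n) := by
    intro n
    simp_rw [e, integral_const_mul, gk_conv hs hh]
  unfold HH pk
  have := hasSum_integral_of_summable_integral_norm (μ := gaussianReal 0 1)
    (F := fun (n : ℤ) z => 2 * gk s (x + √h * z - c - 4 * n)) ?_ ?_
  · rw [← this.tsum_eq]
    exact tsum_congr hgi
  · intro n
    simp_rw [e]
    exact (gk_comp_integrable hs _ _).const_mul 2
  · refine (gk_summable (s + h) (x - c)).congr fun n => ?_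
    rw [← hgi]
    refine integral_congr_ae (Eventually.of_forall fun z => ?_)
    simp only
    rw [Real.norm_of_nonneg (mul_nonneg zero_le_two (gk_nonneg _ _))]

lemma bdd_integrable {φ : ℝ → ℝ} (hφ : Continuous φ) {M : ℝ} (hM : ∀ x, |φ x| ≤ M) (μ : Measure ℝ)
    [IsFiniteMeasure μ] : Integrable φ μ :=
  Integrable.mono' (integrable_const M) hφ.aestronglyMeasurable (Eventually.of_forall hM)

lemma HH_eq {φ : ℝ → ℝ} (hφ : Continuous φ) {t : ℝ} (ht : 0 ≤ t) (x : ℝ) :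
    HH φ t x = ∫ w, φ (x + w) ∂(gaussianReal 0 t.toNNReal) := by
  have h : (gaussianReal 0 1).map (fun z => √t * z) = gaussianReal 0 t.toNNReal := by
    rw [gaussianReal_map_const_mul]
    congr 1
    · simp
    · ext; simp [Real.sq_sqrt ht, ht]
  rw [← h, integral_map (by fun_prop)]
  · rfl
  · exact (by fun_prop : Continuous fun w => φ (x + w)).aestronglyMeasurable

lemma HH_continuous {φ : ℝ → ℝ} (hφ : Continuous φ) {M : ℝ} (hM : ∀ x, |φ x| ≤ M) :
    Continuous (fun p : ℝ × ℝ => HH φ p.1 p.2) := by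
  unfold HH
  refine continuous_of_dominated (bound := fun _ => M) ?_ ?_ (integrable_const M) ?_
  · intro p
    exact (by fun_prop : Continuous fun z => φ (p.2 + √p.1 * z)).aestronglyMeasurable
  · intro p
    exact Eventually.of_forall fun z => hM _
  · refine Eventually.of_forall fun z => ?_
    fun_prop

lemma HH_semigroup {φ : ℝ → ℝ} (hφ : Continuous φ) {M : ℝ} (hM : ∀ x, |φ x| ≤ M) {t h : ℝ}
    (ht : 0 ≤ t) (hh : 0 ≤ h) (x : ℝ) : HH φ (t + h) x = HH (HH φ t) h x := by
  have hc : Continuous (HH φ t) := (HH_continuous hφ hM).comp (by fun_prop : Continuous fun y : ℝ => (t, y))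
  rw [HH_eq hφ (add_nonneg ht hh), HH_eq hc hh]
  simp_rw [HH_eq hφ ht]
  have : gaussianReal 0 (t + h).toNNReal = (gaussianReal 0 h.toNNReal) ∗ (gaussianReal 0 t.toNNReal) := by
    rw [gaussianReal_conv_gaussianReal]
    congr 1
    · simp
    · rw [add_comm, Real.toNNReal_add hh ht]
  rw [this, integral_conv]
  · simp_rw [add_assoc]
  · exact bdd_integrable (by fun_prop) (fun y => hM _) _

lemma HH_zero (φ : ℝ → ℝ) (x : ℝ) : HH φ 0 x = φ x := by
  simp [HH]

lemma HH_ge {φ : ℝ → ℝ} (hφ : Continuous φ) {M : ℝ} (hM : ∀ x, |φ x| ≤ M) {m : ℝ} (h : ∀ x, m ≤ φ x) (t x : ℝ) :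
    m ≤ HH φ t x := by
  have h1 : ∫ z, m ∂(gaussianReal 0 1) ≤ HH φ t x := by
    apply integral_mono (integrable_const m)
    · exact bdd_integrable (by fun_prop) (fun y => hM _) _
    · intro z; exact h _
  simpa using h1

lemma HH_one_sub {φ : ℝ → ℝ} (hφ : Continuous φ) {M : ℝ} (hM : ∀ x, |φ x| ≤ M) (t x : ℝ) :
    HH (fun y => 1 - φ y) t x = 1 - HH φ t x := by
  unfold HH
  rw [integral_sub (integrable_const 1)]
  · simp
  · exact bdd_integrable (by fun_prop) (fun y => hM _) _

lemma HH_add_sub {f g k : ℝ → ℝ} (hf : Continuous f) (hg : Continuous g) (hk : Continuous k) {M : ℝ}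
    (hM : ∀ x, |f x| ≤ M) (hM' : ∀ x, |g x| ≤ M) (hM'' : ∀ x, |k x| ≤ M) (t x : ℝ) :
    HH (fun y => f y + g y - k y) t x = HH f t x + HH g t x - HH k t x := by
  unfold HH
  rw [integral_sub, integral_add]
  · exact bdd_integrable (by fun_prop) (fun y => hM _) _
  · exact bdd_integrable (by fun_prop) (fun y => hM' _) _
  · exact (bdd_integrable (by fun_prop) (fun y => hM _) _).add (bdd_integrable (by fun_prop) (fun y => hM' _) _)
  · exact bdd_integrable (by fun_prop) (fun y => hM'' _) _

/-- Boundary source term. -/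
noncomputable def SS (α : ℝ → ℝ) (c t x : ℝ) : ℝ := ∫ s in (0:ℝ)..t, pk s (x - c) * α (t - s)

lemma inv_sqrt_integrable (T : ℝ) (hT : 0 ≤ T) : IntegrableOn (fun s : ℝ => (√s)⁻¹) (Set.Ioc 0 T) := by
  have := (intervalIntegral.intervalIntegrable_rpow' (a := 0) (b := T) (r := -(1/2)) (by norm_num))
  rw [intervalIntegrable_iff_integrableOn_Ioc_of_le hT] at this
  refine this.congr_fun ?_ measurableSet_Ioc
  intro s hs
  simp only
  rw [Real.rpow_neg hs.1.le, Real.sqrt_eq_rpow]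

lemma pk_meas_comp {X : Type*} [MeasurableSpace X] {f g : X → ℝ} (hf : Measurable f) (hg : Measurable g) :
    Measurable (fun a => pk (f a) (g a)) := by
  have := pk_measurable.comp (hf.prodMk hg)
  simpa only [Function.comp_def] using this

lemma SS_integrand_meas {α : ℝ → ℝ} (hα : Continuous α) (c t x : ℝ) :
    Measurable (fun s => pk s (x - c) * α (t - s)) := by
  have h1 : Measurable fun s : ℝ => pk s (x - c) :=
    pk_meas_comp measurable_id measurable_const
  have h2 : Measurable fun s : ℝ => α (t - s) := hα.measurable.comp (by fun_prop)
  exact h1.mul h2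

lemma SS_integrableOn {α : ℝ → ℝ} (hα : Continuous α) {M : ℝ} (hM : ∀ x, |α x| ≤ M) (c : ℝ) (t x : ℝ) {T : ℝ}
    (hT : 0 < T) :
    IntegrableOn (fun s => pk s (x - c) * α (t - s)) (Set.Ioc 0 T) := by
  obtain ⟨C, hC, hb⟩ := pk_bound T hT
  refine Integrable.mono' (((inv_sqrt_integrable T hT.le).const_mul C).mul_const M)
    (SS_integrand_meas hα c t x).aestronglyMeasurable ?_
  refine (ae_restrict_iff' measurableSet_Ioc).2 (Eventually.of_forall fun s hs => ?_)
  rw [Real.norm_eq_abs, abs_mul, abs_of_nonneg (pk_nonneg _ _)]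
  exact mul_le_mul (hb s hs.2 _) (hM _) (abs_nonneg _) ((pk_nonneg _ _).trans (hb s hs.2 0))

lemma SS_intervalIntegrable {α : ℝ → ℝ} (hα : Continuous α) {M : ℝ} (hM : ∀ x, |α x| ≤ M) (c : ℝ) (t x : ℝ) {a b : ℝ}
    (ha : 0 ≤ a) (hb : 0 ≤ b) :
    IntervalIntegrable (fun s => pk s (x - c) * α (t - s)) volume a b := by
  rw [intervalIntegrable_iff]
  refine (SS_integrableOn hα hM c t x (T := max a b + 1) (by positivity)).mono_set ?_
  intro s hs
  rw [Set.mem_uIoc] at hs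
  rcases hs with ⟨h1, h2⟩ | ⟨h1, h2⟩
  · exact ⟨by linarith, by linarith [le_max_right a b]⟩
  · exact ⟨by linarith, by linarith [le_max_left a b]⟩

lemma SS_continuousOn {α : ℝ → ℝ} (hα : Continuous α) {M : ℝ} (hM : ∀ x, |α x| ≤ M) (c T : ℝ) (hT : 0 < T) :
    ContinuousOn (fun p : ℝ × ℝ => SS α c p.1 p.2) (Set.Icc 0 T ×ˢ Set.univ) := by
  obtain ⟨C, hC, hb⟩ := pk_bound T hT
  have hM0 : 0 ≤ M := (abs_nonneg _).trans (hM 0)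
  have e : ∀ p ∈ (Set.Icc 0 T ×ˢ Set.univ : Set (ℝ × ℝ)), SS α c p.1 p.2 =
      ∫ s in Set.Ioc 0 T, (Set.Iic p.1).indicator (fun s => pk s (p.2 - c) * α (p.1 - s)) s := by
    intro p hp
    have hp := hp.1
    unfold SS
    rw [intervalIntegral.integral_of_le hp.1, setIntegral_indicator measurableSet_Iic]
    congr 2
    ext s
    simp only [Set.mem_Ioc, Set.mem_inter_iff, Set.mem_Iic]
    exact ⟨fun h => ⟨⟨h.1, h.2.trans hp.2⟩, h.2⟩, fun h => ⟨h.1.1, h.2⟩⟩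
  refine ContinuousOn.congr ?_ e
  intro p0 hp0
  refine continuousWithinAt_of_dominated (bound := fun s => C * (√s)⁻¹ * M) ?_ ?_ ?_ ?_
  · refine Eventually.of_forall fun p => ?_
    exact ((SS_integrand_meas hα c p.1 p.2).indicator measurableSet_Iic).aestronglyMeasurable
  · refine Eventually.of_forall fun p => ?_
    refine (ae_restrict_iff' measurableSet_Ioc).2 (Eventually.of_forall fun s hs => ?_)
    refine (norm_indicator_le_norm_self _ _).trans ?_
    rw [Real.norm_eq_abs, abs_mul, abs_of_nonneg (pk_nonneg _ _)]
    exact mul_le_mul (hb s hs.2 _) (hM _) (abs_nonneg _) ((pk_nonneg _ _).trans (hb s hs.2 0))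
  · exact ((inv_sqrt_integrable T hT.le).const_mul C).mul_const M
  · have hne : ∀ᵐ s ∂(volume.restrict (Set.Ioc 0 T)), s ≠ p0.1 := by
      apply ae_restrict_of_ae
      simp [ae_iff]
    filter_upwards [hne] with s hs
    apply ContinuousAt.continuousWithinAt
    have hpk := pk_continuous s
    rcases lt_or_gt_of_ne hs with h | h
    · have : (fun p : ℝ × ℝ => (Set.Iic p.1).indicator (fun s => pk s (p.2 - c) * α (p.1 - s)) s) =ᶠ[𝓝 p0]
        fun p => pk s (p.2 - c) * α (p.1 - s) := by
        filter_upwards [(continuous_fst.tendsto p0).eventually (lt_mem_nhds h)] with p hp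
        rw [Set.indicator_of_mem]
        exact le_of_lt hp
      refine ContinuousAt.congr ?_ this.symm
      exact (by fun_prop : Continuous fun p : ℝ × ℝ => pk s (p.2 - c) * α (p.1 - s)).continuousAt
    · have : (fun p : ℝ × ℝ => (Set.Iic p.1).indicator (fun s => pk s (p.2 - c) * α (p.1 - s)) s) =ᶠ[𝓝 p0]
        fun p => 0 := by
        filter_upwards [(continuous_fst.tendsto p0).eventually (gt_mem_nhds h)] with p hp
        rw [Set.indicator_of_notMem]
        simpa using hp
      refine ContinuousAt.congr ?_ this.symm
      exact continuousAt_const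

lemma SS_periodic (α : ℝ → ℝ) (c t x : ℝ) (m : ℤ) : SS α c t (x + 4 * m) = SS α c t x := by
  unfold SS
  congr 1
  ext s
  rw [← pk_periodic s (x - c) m]
  congr 2; ring

lemma SS_bound {α : ℝ → ℝ} {M : ℝ} (hM : ∀ x, |α x| ≤ M) (T : ℝ) (hT : 0 < T) :
    ∃ B, ∀ c, ∀ t ∈ Set.Icc 0 T, ∀ x, |SS α c t x| ≤ B := by
  obtain ⟨C, hC, hb⟩ := pk_bound T hT
  have hM0 : 0 ≤ M := (abs_nonneg _).trans (hM 0)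
  refine ⟨∫ s in Set.Ioc 0 T, C * (√s)⁻¹ * M, fun c t ht x => ?_⟩
  unfold SS
  rw [intervalIntegral.integral_of_le ht.1]
  have hi : IntegrableOn (fun s => C * (√s)⁻¹ * M) (Set.Ioc 0 T) :=
    ((inv_sqrt_integrable T hT.le).const_mul C).mul_const M
  have hsub : Set.Ioc 0 t ⊆ Set.Ioc 0 T := Set.Ioc_subset_Ioc_right ht.2
  calc |∫ s in Set.Ioc 0 t, pk s (x - c) * α (t - s)| ≤ ∫ s in Set.Ioc 0 t, C * (√s)⁻¹ * M := by
        rw [← Real.norm_eq_abs]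
        refine norm_integral_le_of_norm_le (hi.mono_set hsub) ?_
        refine (ae_restrict_iff' measurableSet_Ioc).2 (Eventually.of_forall fun s hs => ?_)
        rw [Real.norm_eq_abs, abs_mul, abs_of_nonneg (pk_nonneg _ _)]
        have := hsub hs
        exact mul_le_mul (hb s this.2 _) (hM _) (abs_nonneg _) ((pk_nonneg _ _).trans (hb s this.2 0))
    _ ≤ _ := by
        refine setIntegral_mono_set hi ?_ hsub.eventuallyLE
        exact Eventually.of_forall fun s => by
          simp only [Pi.zero_apply]; positivity

lemma SS_restart {α : ℝ → ℝ} (hα : Continuous α) {M : ℝ} (hM : ∀ x, |α x| ≤ M) (c : ℝ) {t h : ℝ} (ht : 0 < t)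
    (hh : 0 ≤ h) (x : ℝ) :
    SS α c (t + h) x = HH (SS α c t) h x + ∫ s in (0:ℝ)..h, pk s (x - c) * α (t + h - s) := by
  obtain ⟨C, hC, hb⟩ := pk_bound t ht
  have h1 : SS α c (t + h) x = (∫ s in (0:ℝ)..h, pk s (x - c) * α (t + h - s)) +
      ∫ s in h..(t + h), pk s (x - c) * α (t + h - s) := by
    unfold SS
    rw [intervalIntegral.integral_add_adjacent_intervals]
    · exact SS_intervalIntegrable hα hM _ _ _ le_rfl hh
    · exact SS_intervalIntegrable hα hM _ _ _ hh (by linarith)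
  rw [h1, add_comm]
  congr 1
  have h2 : ∫ s in h..(t + h), pk s (x - c) * α (t + h - s) = ∫ s in (0:ℝ)..t, pk (s + h) (x - c) * α (t - s) := by
    have := intervalIntegral.integral_comp_add_right (a := 0) (b := t) (fun s => pk s (x - c) * α (t + h - s)) h
    rw [zero_add] at this
    rw [← this]
    congr 1; ext s; congr 2; ring
  rw [h2]
  unfold HH SS
  simp_rw [intervalIntegral.integral_of_le ht.le]
  rw [integral_integral_swap]
  · refine setIntegral_congr_fun measurableSet_Ioc fun s hs => ?_
    rw [integral_mul_const, ← HH_pk hs.1 hh]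
    rfl
  · refine Integrable.mono' (g := fun q : ℝ × ℝ => 1 * (C * (√q.2)⁻¹ * M)) ?_ ?_ ?_
    · exact Integrable.mul_prod (integrable_const (1:ℝ))
        (((inv_sqrt_integrable t ht.le).const_mul C).mul_const M)
    · have h3 : Measurable fun q : ℝ × ℝ => pk q.2 (x + √h * q.1 - c) :=
        pk_meas_comp measurable_snd (by fun_prop)
      have h4 : Measurable fun q : ℝ × ℝ => α (t - q.2) := hα.measurable.comp (by fun_prop)
      have h6 : Measurable (Function.uncurry fun (z s : ℝ) => pk s (x + √h * z - c) * α (t - s)) := h3.mul h4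
      exact h6.aestronglyMeasurable
    · have h5 : ∀ᵐ q ∂((gaussianReal 0 1).prod (volume.restrict (Set.Ioc 0 t))), q.2 ∈ Set.Ioc 0 t := by
        refine (Measure.quasiMeasurePreserving_snd).ae ?_
        exact ae_restrict_mem measurableSet_Ioc
      filter_upwards [h5] with q hq
      simp only [Function.uncurry, one_mul]
      rw [Real.norm_eq_abs, abs_mul, abs_of_nonneg (pk_nonneg _ _)]
      exact mul_le_mul (hb _ hq.2 _) (hM _) (abs_nonneg _) ((pk_nonneg _ _).trans (hb _ hq.2 0))

/-- The full field. -/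
noncomputable def FF (φ α β : ℝ → ℝ) (c d t x : ℝ) : ℝ := HH φ t x + SS α c t x - SS β d t x

lemma FF_continuousOn {φ α β : ℝ → ℝ} (hφ : Continuous φ) (hα : Continuous α) (hβ : Continuous β) {M : ℝ}
    (hφM : ∀ x, |φ x| ≤ M) (hαM : ∀ x, |α x| ≤ M) (hβM : ∀ x, |β x| ≤ M) (c d T : ℝ) (hT : 0 < T) :
    ContinuousOn (fun p : ℝ × ℝ => FF φ α β c d p.1 p.2) (Set.Icc 0 T ×ˢ Set.univ) :=
  ((HH_continuous hφ hφM).continuousOn.add (SS_continuousOn hα hαM c T hT)).sub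
    (SS_continuousOn hβ hβM d T hT)

lemma HH_abs_le {φ : ℝ → ℝ} {M : ℝ} (hM : ∀ x, |φ x| ≤ M) (t x : ℝ) : |HH φ t x| ≤ M := by
  have := norm_integral_le_of_norm_le (μ := gaussianReal 0 1) (f := fun z => φ (x + √t * z)) (integrable_const M)
    (Eventually.of_forall fun z => hM _)
  simpa [HH] using this

lemma HH_periodic {φ : ℝ → ℝ} (hp : ∀ x, ∀ m : ℤ, φ (x + 4 * m) = φ x) (t x : ℝ) (m : ℤ) :
    HH φ t (x + 4 * m) = HH φ t x := by
  unfold HH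
  congr 1; ext z
  rw [← hp (x + √t * z) m]
  congr 1; ring

lemma min_principle {φ α β : ℝ → ℝ} (hφ : Continuous φ) (hα : Continuous α) (hβ : Continuous β) {M : ℝ}
    (hφM : ∀ x, |φ x| ≤ M) (hαM : ∀ x, |α x| ≤ M) (hβM : ∀ x, |β x| ≤ M) (c d T : ℝ) (hT : 0 < T)
    (hφ0 : ∀ x, 0 ≤ φ x) (hα0 : ∀ x, 0 ≤ α x)
    (hp : ∀ x, ∀ m : ℤ, φ (x + 4 * m) = φ x)
    (hz : ∀ t ∈ Set.Icc 0 T, FF φ α β c d t d < 0 → β t = 0) :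
    ∀ t ∈ Set.Icc 0 T, ∀ x, 0 ≤ FF φ α β c d t x := by
  by_contra! hcon
  obtain ⟨t0, ht0, x0, hneg⟩ := hcon
  have hM0 : 0 ≤ M := (abs_nonneg _).trans (hφM 0)
  set F := FF φ α β c d with hF
  have hFc := FF_continuousOn hφ hα hβ hφM hαM hβM c d T hT
  have hper : ∀ t x, ∀ m : ℤ, F t (x + 4 * m) = F t x := by
    intro t x m
    simp only [hF, FF, HH_periodic hp, SS_periodic]
  set η := -(F t0 x0) / (2 * T) with hη
  have hη0 : 0 < η := by
    apply div_pos <;> linarith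
  -- minimiser
  obtain ⟨⟨ts, xs⟩, hmem, hmin⟩ := (isCompact_Icc.prod isCompact_Icc : IsCompact (Set.Icc (0:ℝ) T ×ˢ Set.Icc (0:ℝ) 4)).exists_isMinOn
    ⟨(0, 0), ⟨⟨le_rfl, hT.le⟩, ⟨le_rfl, by norm_num⟩⟩⟩
    (f := fun p : ℝ × ℝ => F p.1 p.2 + η * p.1)
    ((hFc.mono (Set.prod_mono_right (Set.subset_univ _))).add (by fun_prop))
  have hts : ts ∈ Set.Icc 0 T := hmem.1
  have hmin' : ∀ t ∈ Set.Icc 0 T, ∀ x, F ts xs + η * ts ≤ F t x + η * t := by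
    intro t ht x
    have h1 : x - 4 * (⌊x / 4⌋ : ℤ) ∈ Set.Icc (0:ℝ) 4 := by
      have := Int.floor_le (x / 4)
      have := Int.lt_floor_add_one (x / 4)
      constructor <;> linarith
    have h2 := hmin (show (t, x - 4 * (⌊x / 4⌋ : ℤ)) ∈ _ from ⟨ht, h1⟩)
    simp only [Set.mem_ofPred_eq] at h2
    have h3 := hper t (x - 4 * (⌊x / 4⌋ : ℤ)) ⌊x / 4⌋
    rw [sub_add_cancel] at h3
    rw [h3]; exact h2
  have hFneg : F ts xs < 0 := by
    have h1 := hmin' t0 ht0 x0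
    have h2 : η * t0 ≤ -(F t0 x0) / 2 := by
      have : η * t0 ≤ η * T := by gcongr; exact ht0.2
      have h4 : η * T = -(F t0 x0) / 2 := by rw [hη]; field_simp
      linarith
    have h3 : 0 ≤ η * ts := mul_nonneg hη0.le hts.1
    linarith
  have hts0 : 0 < ts := by
    rcases hts.1.eq_or_lt with h | h
    · exfalso
      rw [← h] at hFneg
      simp only [hF, FF, HH_zero, SS, intervalIntegral.integral_same] at hFneg
      linarith [hφ0 xs]
    · exact h
  -- smallness of the sink
  have hsmall : ∃ h0 > 0, ∀ s, 0 ≤ s → s ≤ h0 → s < ts → pk s (xs - d) * β (ts - s) ≤ η / 2 := by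
    by_cases hx : ∃ n : ℤ, xs - d = 4 * n
    · obtain ⟨n, hn⟩ := hx
      have hxs : xs = d + 4 * n := by linarith
      have hd : F ts d < 0 := by rw [← hper ts d n, ← hxs]; exact hFneg
      have hcd : ContinuousOn (fun t => F t d) (Set.Icc 0 T) :=
        hFc.comp (f := fun t => (t, d)) (by fun_prop) (fun t ht => ⟨ht, Set.mem_univ _⟩)
      have h1 : ∀ᶠ t in 𝓝[Set.Icc 0 T] ts, F t d < 0 := (hcd ts hts).eventually (gt_mem_nhds hd)
      rw [eventually_nhdsWithin_iff, Metric.eventually_nhds_iff] at h1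
      obtain ⟨ε, hε, h1⟩ := h1
      refine ⟨ε / 2, by positivity, fun s hs hs' hst => ?_⟩
      have hm : ts - s ∈ Set.Icc 0 T := ⟨by linarith, by linarith [hts.2]⟩
      have := h1 (y := ts - s) (by rw [Real.dist_eq, abs_lt]; constructor <;> linarith) hm
      rw [hz _ hm this, mul_zero]
      positivity
    · push Not at hx
      obtain ⟨h0, hh0, h1⟩ := pk_small hx (ε := η / (2 * (M + 1))) (by positivity)
      refine ⟨h0, hh0, fun s hs hs' hst => ?_⟩
      calc pk s (xs - d) * β (ts - s) ≤ η / (2 * (M + 1)) * (M + 1) := by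
            apply mul_le_mul_of_nonneg (h1 s hs') _ (pk_nonneg _ _) (by positivity)
            linarith [le_abs_self (β (ts - s)), hβM (ts - s)]
        _ = η / 2 := by field_simp
  obtain ⟨h0, hh0, hsmall⟩ := hsmall
  set h := min h0 (ts / 2) with hh
  have hhpos : 0 < h := lt_min hh0 (by linarith)
  have hh1 : h ≤ h0 := min_le_left _ _
  have hh2 : h ≤ ts / 2 := min_le_right _ _
  have htm : ts - h ∈ Set.Icc 0 T := ⟨by linarith, by linarith [hts.2]⟩
  have htpos : 0 < ts - h := by linarith
  have hslice : ∀ {γ : ℝ → ℝ} (hγ : Continuous γ) (hγM : ∀ x, |γ x| ≤ M) (e : ℝ), Continuous (SS γ e (ts - h)) := by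
    intro γ hγ hγM e
    have := (SS_continuousOn hγ hγM e T hT).comp (f := fun y => (ts - h, y)) (s := Set.univ) (by fun_prop)
      (fun y _ => ⟨htm, Set.mem_univ _⟩)
    exact continuousOn_univ.1 this
  have hHc : Continuous (HH φ (ts - h)) :=
    (HH_continuous hφ hφM).comp (by fun_prop : Continuous fun y : ℝ => (ts - h, y))
  obtain ⟨B1, hB1⟩ := SS_bound hαM T hT
  obtain ⟨B2, hB2⟩ := SS_bound hβM T hT
  set B := max M (max B1 B2) with hB
  have b1 : ∀ x, |HH φ (ts - h) x| ≤ B := fun x => (HH_abs_le hφM _ _).trans (le_max_left _ _)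
  have b2 : ∀ x, |SS α c (ts - h) x| ≤ B := fun x =>
    (hB1 c _ htm x).trans ((le_max_left _ _).trans (le_max_right _ _))
  have b3 : ∀ x, |SS β d (ts - h) x| ≤ B := fun x =>
    (hB2 d _ htm x).trans ((le_max_right _ _).trans (le_max_right _ _))
  have hrestart : F ts xs = HH (F (ts - h)) h xs + (∫ s in (0:ℝ)..h, pk s (xs - c) * α (ts - s))
      - ∫ s in (0:ℝ)..h, pk s (xs - d) * β (ts - s) := by
    have e1 := HH_semigroup hφ hφM htpos.le hhpos.le xs
    have e2 := SS_restart hα hαM c htpos hhpos.le xs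
    have e3 := SS_restart hβ hβM d htpos hhpos.le xs
    have e4 := HH_add_sub hHc (hslice hα hαM c) (hslice hβ hβM d) b1 b2 b3 h xs
    have e5 : HH (F (ts - h)) h xs = HH (fun y => HH φ (ts - h) y + SS α c (ts - h) y - SS β d (ts - h) y) h xs := rfl
    rw [sub_add_cancel] at e1 e2 e3
    rw [e5, e4]
    simp only [hF, FF]
    rw [e1, e2, e3]
    ring
  have i1 : F ts xs + η * h ≤ HH (F (ts - h)) h xs := by
    have hFcs : Continuous (F (ts - h)) := (hHc.add (hslice hα hαM c)).sub (hslice hβ hβM d)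
    refine HH_ge (M := B + B + B) hFcs ?_ ?_ h xs
    · intro x
      have a1 := abs_sub (HH φ (ts - h) x + SS α c (ts - h) x) (SS β d (ts - h) x)
      have a2 := abs_add_le (HH φ (ts - h) x) (SS α c (ts - h) x)
      have := b1 x
      have := b2 x
      have := b3 x
      simp only [hF, FF]
      linarith
    · intro x
      have := hmin' _ htm x
      linarith
  have i2 : 0 ≤ ∫ s in (0:ℝ)..h, pk s (xs - c) * α (ts - s) :=
    intervalIntegral.integral_nonneg hhpos.le fun s _ => mul_nonneg (pk_nonneg _ _) (hα0 _)
  have i3 : ∫ s in (0:ℝ)..h, pk s (xs - d) * β (ts - s) ≤ ∫ s in (0:ℝ)..h, η / 2 := by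
    refine intervalIntegral.integral_mono_on hhpos.le
      (SS_intervalIntegrable hβ hβM d ts xs le_rfl hhpos.le) (by simp) ?_
    intro s hs
    exact hsmall s hs.1 (hs.2.trans hh1) (by linarith [hs.2])
  rw [intervalIntegral.integral_const, smul_eq_mul] at i3
  have : 0 < η * h := mul_pos hη0 hhpos
  linarith

lemma exp_weight_integrable {μ : ℝ} (hμ : 0 < μ) :
    IntegrableOn (fun s : ℝ => (√s)⁻¹ * Real.exp (-(μ * s))) (Set.Ioi 0) ∧
    ∫ s in Set.Ioi (0:ℝ), (√s)⁻¹ * Real.exp (-(μ * s)) = (1 / μ) ^ (1/2 : ℝ) * Real.Gamma (1/2) := by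
  have h := Real.integral_rpow_mul_exp_neg_mul_Ioi (a := 1/2) (r := μ) (by norm_num) hμ
  have e : ∫ s in Set.Ioi (0:ℝ), (√s)⁻¹ * Real.exp (-(μ * s)) = (1 / μ) ^ (1/2 : ℝ) * Real.Gamma (1/2) := by
    rw [← h]
    refine setIntegral_congr_fun measurableSet_Ioi fun s hs => ?_
    have hs : 0 < s := hs
    rw [show (1/2 - 1 : ℝ) = -(1/2) by norm_num, Real.rpow_neg hs.le, Real.sqrt_eq_rpow]
  refine ⟨?_, e⟩
  by_contra hn
  rw [integral_undef hn] at e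
  have : 0 < (1 / μ) ^ (1/2 : ℝ) * Real.Gamma (1/2) :=
    mul_pos (by positivity) (Real.Gamma_pos_of_pos (by norm_num))
  linarith

lemma SS_diff (T : ℝ) (hT : 0 < T) : ∃ C > 0, ∀ (μ : ℝ), 0 < μ → ∀ (α β : ℝ → ℝ) (M : ℝ), Continuous α → Continuous β →
    (∀ x, |α x| ≤ M) → (∀ x, |β x| ≤ M) → ∀ D, 0 ≤ D →
    (∀ τ ∈ Set.Icc 0 T, |α τ - β τ| ≤ D * Real.exp (μ * τ)) →
    ∀ t ∈ Set.Icc 0 T, ∀ c x, |SS α c t x - SS β c t x| ≤ C * (1 / μ) ^ (1/2 : ℝ) * (D * Real.exp (μ * t)) := by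
  obtain ⟨C, hC, hb⟩ := pk_bound T hT
  have hG : 0 < Real.Gamma (1/2) := Real.Gamma_pos_of_pos (by norm_num)
  refine ⟨C * Real.Gamma (1/2), by positivity, ?_⟩
  intro μ hμ α β M hα hβ hαM hβM D hD hd t ht c x
  obtain ⟨hi, hv⟩ := exp_weight_integrable hμ
  unfold SS
  rw [← intervalIntegral.integral_sub (SS_intervalIntegrable hα hαM _ _ _ le_rfl ht.1)
    (SS_intervalIntegrable hβ hβM _ _ _ le_rfl ht.1), intervalIntegral.integral_of_le ht.1]
  have hi2 : IntegrableOn (fun s : ℝ => (C * (D * Real.exp (μ * t))) * ((√s)⁻¹ * Real.exp (-(μ * s)))) (Set.Ioi 0) :=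
    hi.const_mul _
  calc |∫ s in Set.Ioc 0 t, (pk s (x - c) * α (t - s) - pk s (x - c) * β (t - s))|
      ≤ ∫ s in Set.Ioc 0 t, (C * (D * Real.exp (μ * t))) * ((√s)⁻¹ * Real.exp (-(μ * s))) := by
        rw [← Real.norm_eq_abs]
        refine norm_integral_le_of_norm_le (hi2.mono_set Set.Ioc_subset_Ioi_self) ?_
        refine (ae_restrict_iff' measurableSet_Ioc).2 (Eventually.of_forall fun s hs => ?_)
        rw [← mul_sub, Real.norm_eq_abs, abs_mul, abs_of_nonneg (pk_nonneg _ _)]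
        have h1 := hb s (hs.2.trans ht.2) (x - c)
        have h2 := hd (t - s) ⟨by linarith [hs.2], by linarith [hs.1, ht.2]⟩
        calc pk s (x - c) * |α (t - s) - β (t - s)| ≤ (C * (√s)⁻¹) * (D * Real.exp (μ * (t - s))) :=
              mul_le_mul h1 h2 (abs_nonneg _) (by positivity)
          _ = _ := by
              rw [mul_sub, sub_eq_add_neg, Real.exp_add]; ring
    _ ≤ ∫ s in Set.Ioi 0, (C * (D * Real.exp (μ * t))) * ((√s)⁻¹ * Real.exp (-(μ * s))) := by
        refine setIntegral_mono_set hi2 ?_ Set.Ioc_subset_Ioi_self.eventuallyLE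
        exact Eventually.of_forall fun s => by
          simp only [Pi.zero_apply]; positivity
    _ = _ := by
        rw [integral_const_mul, hv]; ring

/-- Clamp to `[0,1]`. -/
noncomputable def cl (x : ℝ) : ℝ := max 0 (min 1 x)

lemma cl_mem (x : ℝ) : 0 ≤ cl x ∧ cl x ≤ 1 :=
  ⟨le_max_left _ _, max_le zero_le_one (min_le_left _ _)⟩

lemma cl_of_mem {x : ℝ} (h : x ∈ Set.Icc (0:ℝ) 1) : cl x = x := by
  unfold cl; rw [min_eq_right h.2, max_eq_right h.1]

lemma cl_continuous : Continuous cl := by unfold cl; fun_prop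

lemma cl_lip (x y : ℝ) : |cl x - cl y| ≤ |x - y| := by
  unfold cl
  refine (abs_max_sub_max_le_max _ _ _ _).trans ?_
  simp only [sub_self, abs_zero]
  refine max_le (abs_nonneg _) ?_
  refine (abs_min_sub_min_le_max _ _ _ _).trans ?_
  simp

lemma pow_lip {a b : ℝ} (ha : 0 ≤ a ∧ a ≤ 1) (hb : 0 ≤ b ∧ b ≤ 1) (K : ℕ) : |a ^ K - b ^ K| ≤ K * |a - b| := by
  refine (abs_pow_sub_pow_le a b K).trans ?_
  have : max |a| |b| ^ (K - 1) ≤ 1 := by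
    apply pow_le_one₀
    · exact le_max_of_le_left (abs_nonneg _)
    · rw [abs_of_nonneg ha.1, abs_of_nonneg hb.1]; exact max_le ha.2 hb.2
  calc |a - b| * K * max |a| |b| ^ (K - 1) ≤ |a - b| * K * 1 := by gcongr
    _ = _ := by ring

/-- Truncated source and sink. -/
noncomputable def src (j : ℝ) (K : ℕ) (U : ℝ → ℝ × ℝ) (τ : ℝ) : ℝ := j / 2 * (1 - (cl (U τ).1) ^ K)
noncomputable def snk (j : ℝ) (K : ℕ) (U : ℝ → ℝ × ℝ) (τ : ℝ) : ℝ := j / 2 * (1 - (1 - cl (U τ).2) ^ K)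

section
variable {j : ℝ} {K : ℕ} {U V : ℝ → ℝ × ℝ}

lemma src_cont (hU : Continuous U) : Continuous (src j K U) := by
  have := cl_continuous; unfold src; fun_prop
lemma snk_cont (hU : Continuous U) : Continuous (snk j K U) := by
  have := cl_continuous; unfold snk; fun_prop

lemma one_sub_pow_mem {a : ℝ} (ha : 0 ≤ a ∧ a ≤ 1) (K : ℕ) : 0 ≤ 1 - a ^ K ∧ 1 - a ^ K ≤ 1 := by
  have h1 := pow_le_one₀ (n := K) ha.1 ha.2
  have h2 := pow_nonneg ha.1 K
  constructor <;> linarith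

lemma one_sub_cl_mem (x : ℝ) : 0 ≤ 1 - cl x ∧ 1 - cl x ≤ 1 := by
  have := cl_mem x
  constructor <;> linarith [this.1, this.2]

lemma src_nonneg (hj : 0 < j) (τ : ℝ) : 0 ≤ src j K U τ :=
  mul_nonneg (by positivity) (one_sub_pow_mem (cl_mem _) K).1
lemma snk_nonneg (hj : 0 < j) (τ : ℝ) : 0 ≤ snk j K U τ :=
  mul_nonneg (by positivity) (one_sub_pow_mem (one_sub_cl_mem _) K).1
lemma src_bdd (hj : 0 < j) (τ : ℝ) : |src j K U τ| ≤ j + 1 := by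
  rw [abs_of_nonneg (src_nonneg hj τ)]
  unfold src
  nlinarith [(one_sub_pow_mem (cl_mem (U τ).1) K).2]
lemma snk_bdd (hj : 0 < j) (τ : ℝ) : |snk j K U τ| ≤ j + 1 := by
  rw [abs_of_nonneg (snk_nonneg hj τ)]
  unfold snk
  nlinarith [(one_sub_pow_mem (one_sub_cl_mem (U τ).2) K).2]

lemma src_lip (hj : 0 < j) (τ : ℝ) : |src j K U τ - src j K V τ| ≤ j / 2 * K * |(U τ).1 - (V τ).1| := by
  unfold src
  rw [← mul_sub, abs_mul, abs_of_pos (by positivity : 0 < j / 2), mul_assoc]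
  apply mul_le_mul_of_nonneg_left _ (by positivity)
  rw [sub_sub_sub_cancel_left, abs_sub_comm]
  refine (pow_lip (cl_mem _) (cl_mem _) K).trans ?_
  exact mul_le_mul_of_nonneg_left (cl_lip _ _) (Nat.cast_nonneg _)

lemma snk_lip (hj : 0 < j) (τ : ℝ) : |snk j K U τ - snk j K V τ| ≤ j / 2 * K * |(U τ).2 - (V τ).2| := by
  unfold snk
  rw [← mul_sub, abs_mul, abs_of_pos (by positivity : 0 < j / 2), mul_assoc]
  apply mul_le_mul_of_nonneg_left _ (by positivity)
  rw [sub_sub_sub_cancel_left, abs_sub_comm]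
  refine (pow_lip (one_sub_cl_mem _) (one_sub_cl_mem _) K).trans ?_
  rw [sub_sub_sub_cancel_left, abs_sub_comm (U τ).2]
  exact mul_le_mul_of_nonneg_left (cl_lip _ _) (Nat.cast_nonneg _)
end

noncomputable def fld (φ : ℝ → ℝ) (j : ℝ) (K : ℕ) (U : ℝ → ℝ × ℝ) (t x : ℝ) : ℝ :=
  FF φ (src j K U) (snk j K U) 1 (-1) t x

lemma fld_contraction (φ : ℝ → ℝ) (j : ℝ) (hj : 0 < j) (K : ℕ) (T : ℝ) (hT : 0 < T) :
    ∃ μ > 0, ∀ U V : ℝ → ℝ × ℝ, Continuous U → Continuous V → ∀ D, 0 ≤ D →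
      (∀ τ ∈ Set.Icc 0 T, |(U τ).1 - (V τ).1| ≤ D * Real.exp (μ * τ) ∧ |(U τ).2 - (V τ).2| ≤ D * Real.exp (μ * τ)) →
      ∀ t ∈ Set.Icc 0 T, ∀ x, |fld φ j K U t x - fld φ j K V t x| ≤ 1 / 2 * (D * Real.exp (μ * t)) := by
  obtain ⟨C, hC, hd⟩ := SS_diff T hT
  set q : ℝ := 2 * C * j * (K + 1) with hq
  have hq0 : 0 < q := by positivity
  refine ⟨q ^ 2, by positivity, fun U V hU hV D hD hUV t ht x => ?_⟩
  have hμ : 0 < q ^ 2 := by positivity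
  have hpow : (1 / q ^ 2) ^ (1/2 : ℝ) = 1 / q := by
    rw [← Real.sqrt_eq_rpow, Real.sqrt_div zero_le_one, Real.sqrt_sq hq0.le, Real.sqrt_one]
  have h1 := hd _ hμ (src j K U) (src j K V) (j + 1) (src_cont hU) (src_cont hV) (src_bdd hj) (src_bdd hj)
    (j / 2 * K * D) (by positivity) (fun τ hτ => by
      refine (src_lip hj τ).trans ?_
      rw [mul_assoc (j / 2 * K)]
      exact mul_le_mul_of_nonneg_left (hUV τ hτ).1 (by positivity)) t ht 1 x
  have h2 := hd _ hμ (snk j K U) (snk j K V) (j + 1) (snk_cont hU) (snk_cont hV) (snk_bdd hj) (snk_bdd hj)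
    (j / 2 * K * D) (by positivity) (fun τ hτ => by
      refine (snk_lip hj τ).trans ?_
      rw [mul_assoc (j / 2 * K)]
      exact mul_le_mul_of_nonneg_left (hUV τ hτ).2 (by positivity)) t ht (-1) x
  rw [hpow] at h1 h2
  have e : fld φ j K U t x - fld φ j K V t x = (SS (src j K U) 1 t x - SS (src j K V) 1 t x) -
      (SS (snk j K U) (-1) t x - SS (snk j K V) (-1) t x) := by
    unfold fld FF; ring
  rw [e]
  refine (abs_sub _ _).trans ((add_le_add h1 h2).trans ?_)
  have hE : 0 ≤ D * Real.exp (q ^ 2 * t) := by positivity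
  have : C * (1 / q) * (j / 2 * K * D * Real.exp (q ^ 2 * t)) + C * (1 / q) * (j / 2 * K * D * Real.exp (q ^ 2 * t))
     = (C * j * K / q) * (D * Real.exp (q ^ 2 * t)) := by field_simp; ring
  rw [this]
  apply mul_le_mul_of_nonneg_right _ hE
  rw [div_le_iff₀ hq0, hq]
  have : 0 < C * j := by positivity
  nlinarith

lemma fld_continuousOn {φ : ℝ → ℝ} (hφ : Continuous φ) (hφM : ∀ x, |φ x| ≤ 1) {j : ℝ} (hj : 0 < j) (K : ℕ)
    {U : ℝ → ℝ × ℝ} (hU : Continuous U) {T : ℝ} (hT : 0 < T) (x : ℝ) :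
    ContinuousOn (fun t => fld φ j K U t x) (Set.Icc 0 T) :=
  (FF_continuousOn hφ (src_cont hU) (snk_cont hU) (M := j + 1) (fun x => (hφM x).trans (by linarith)) (src_bdd hj)
    (snk_bdd hj) 1 (-1) T hT).comp (f := fun t => (t, x)) (by fun_prop) (fun t ht => ⟨ht, Set.mem_univ _⟩)

lemma exists_fixed {φ : ℝ → ℝ} (hφ : Continuous φ) (hφM : ∀ x, |φ x| ≤ 1) {j : ℝ} (hj : 0 < j) (K : ℕ)
    {T : ℝ} (hT : 0 < T) : ∃ U : ℝ → ℝ × ℝ, Continuous U ∧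
      ∀ t ∈ Set.Icc 0 T, U t = (fld φ j K U t 1, fld φ j K U t (-1)) := by
  obtain ⟨μ, hμ, hcon⟩ := fld_contraction φ j hj K T hT
  let ext : C(Set.Icc (0:ℝ) T, ℝ × ℝ) → ℝ → ℝ × ℝ := fun w τ => Real.exp (μ * τ) • w (Set.projIcc 0 T hT.le τ)
  have hext : ∀ w, Continuous (ext w) := by
    intro w
    have : Continuous (Set.projIcc 0 T hT.le) := continuous_projIcc
    simp only [ext]
    fun_prop
  have hc : ∀ w x, Continuous (fun t : Set.Icc (0:ℝ) T => fld φ j K (ext w) t x) := fun w x =>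
    continuousOn_iff_continuous_restrict.1 (fld_continuousOn hφ hφM hj K (hext w) hT x)
  let Ψ : C(Set.Icc (0:ℝ) T, ℝ × ℝ) → C(Set.Icc (0:ℝ) T, ℝ × ℝ) := fun w =>
    ⟨fun t => Real.exp (-(μ * t)) • (fld φ j K (ext w) t 1, fld φ j K (ext w) t (-1)), by
      have h1 := hc w 1
      have h2 := hc w (-1)
      fun_prop⟩
  have hΨ : ContractingWith (1/2) Ψ := by
    refine ⟨by rw [← NNReal.coe_lt_coe]; norm_num, LipschitzWith.of_dist_le_mul fun w w' => ?_⟩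
    rw [ContinuousMap.dist_le (by positivity)]
    intro t
    have hD : ∀ τ ∈ Set.Icc 0 T, |(ext w τ).1 - (ext w' τ).1| ≤ dist w w' * Real.exp (μ * τ) ∧
        |(ext w τ).2 - (ext w' τ).2| ≤ dist w w' * Real.exp (μ * τ) := by
      intro τ hτ
      have h := ContinuousMap.dist_apply_le_dist (f := w) (g := w') (Set.projIcc 0 T hT.le τ)
      rw [Prod.dist_eq, max_le_iff, Real.dist_eq, Real.dist_eq] at h
      simp only [ext, Prod.smul_fst, Prod.smul_snd, smul_eq_mul, ← mul_sub, abs_mul, Real.abs_exp]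
      rw [mul_comm (dist w w')]
      exact ⟨mul_le_mul_of_nonneg_left h.1 (Real.exp_nonneg _), mul_le_mul_of_nonneg_left h.2 (Real.exp_nonneg _)⟩
    have key := hcon (ext w) (ext w') (hext w) (hext w') (dist w w') dist_nonneg hD t t.2
    have key2 : ∀ x, Real.exp (-(μ * t)) * |fld φ j K (ext w) t x - fld φ j K (ext w') t x| ≤ 1 / 2 * dist w w' := by
      intro x
      calc _ ≤ Real.exp (-(μ * t)) * (1 / 2 * (dist w w' * Real.exp (μ * t))) :=
            mul_le_mul_of_nonneg_left (key x) (Real.exp_nonneg _)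
        _ = 1 / 2 * dist w w' * (Real.exp (-(μ * t)) * Real.exp (μ * t)) := by ring
        _ = _ := by rw [← Real.exp_add]; simp
    simp only [Ψ, ContinuousMap.coe_mk, Prod.dist_eq, Real.dist_eq, Prod.smul_fst, Prod.smul_snd, smul_eq_mul,
      ← mul_sub, abs_mul, Real.abs_exp]
    have : ((1 / 2 : NNReal) : ℝ) = 1 / 2 := by simp
    rw [this]
    exact max_le (key2 1) (key2 (-1))
  have hfix := hΨ.fixedPoint_isFixedPt
  set w := ContractingWith.fixedPoint Ψ hΨ with hw
  refine ⟨ext w, hext w, fun t ht => ?_⟩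
  have h1 : Ψ w ⟨t, ht⟩ = w ⟨t, ht⟩ := by rw [hfix]
  have h2 : ext w t = Real.exp (μ * t) • w ⟨t, ht⟩ := by
    simp only [ext]
    rw [Set.projIcc_of_mem hT.le ht]
  calc ext w t = Real.exp (μ * t) • w ⟨t, ht⟩ := h2
    _ = Real.exp (μ * t) • Ψ w ⟨t, ht⟩ := by rw [h1]
    _ = _ := by
      simp only [Ψ, ContinuousMap.coe_mk]
      rw [smul_smul, ← Real.exp_add]
      simp

lemma fld_bounds {φ : ℝ → ℝ} (hφ : Continuous φ) (hφ01 : ∀ x, φ x ∈ Set.Icc (0:ℝ) 1)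
    (hp : ∀ x, ∀ m : ℤ, φ (x + 4 * m) = φ x) {j : ℝ} (hj : 0 < j) {K : ℕ}
    {T : ℝ} (hT : 0 < T) {U : ℝ → ℝ × ℝ} (hU : Continuous U)
    (hfix : ∀ t ∈ Set.Icc 0 T, U t = (fld φ j K U t 1, fld φ j K U t (-1))) :
    ∀ t ∈ Set.Icc 0 T, ∀ x, fld φ j K U t x ∈ Set.Icc (0:ℝ) 1 := by
  have hφM : ∀ x, |φ x| ≤ j + 1 := fun x => by
    rw [abs_of_nonneg (hφ01 x).1]; linarith [(hφ01 x).2]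
  have hφM' : ∀ x, |1 - φ x| ≤ j + 1 := fun x => by
    rw [abs_of_nonneg (by linarith [(hφ01 x).2])]; linarith [(hφ01 x).1]
  have e : ∀ t x, FF (fun y => 1 - φ y) (snk j K U) (src j K U) (-1) 1 t x = 1 - fld φ j K U t x := by
    intro t x
    unfold fld FF
    rw [HH_one_sub hφ hφM]; ring
  have lo := min_principle hφ (src_cont hU) (snk_cont hU) hφM (src_bdd hj) (snk_bdd hj) 1 (-1) T hT
    (fun x => (hφ01 x).1) (src_nonneg (K := K) hj) hp (fun t ht hneg => by
      have h : (U t).2 < 0 := by rw [hfix t ht]; exact hneg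
      have h2 : cl (U t).2 = 0 := by
        unfold cl; rw [max_eq_left]; exact (min_le_right _ _).trans h.le
      simp [snk, h2])
  have hi := min_principle (φ := fun y => 1 - φ y) (by fun_prop) (snk_cont hU) (src_cont hU) hφM' (snk_bdd hj) (src_bdd hj) (-1) 1 T hT
    (fun x => by linarith [(hφ01 x).2]) (snk_nonneg (K := K) hj) (fun x m => by rw [hp]) (fun t ht hneg => by
      rw [e] at hneg
      have h : 1 < (U t).1 := by rw [hfix t ht]; show 1 < fld φ j K U t 1; linarith
      have h2 : cl (U t).1 = 1 := by
        unfold cl; rw [min_eq_left h.le, max_eq_right zero_le_one]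
      simp [src, h2])
  intro t ht x
  have h1 := lo t ht x
  have h2 := hi t ht x
  rw [e] at h2
  exact ⟨h1, by linarith⟩

lemma P_one (s x : ℝ) : P s x 1 = pk s (x - 1) := by
  unfold P pk
  rw [if_pos (Or.inl rfl)]
  refine tsum_congr fun n => ?_
  rw [sub_sub]; rfl

lemma P_neg_one (s x : ℝ) : P s x (-1) = pk s (x - (-1)) := by
  unfold P pk
  rw [if_pos (Or.inr rfl)]
  refine tsum_congr fun n => ?_
  rw [sub_sub]; rfl

/-- Reflected periodic extension. -/
noncomputable def fold (ρ₀ : ℝ → ℝ) (y : ℝ) : ℝ := ρ₀ (2 / Real.pi * Real.arcsin (Real.sin (Real.pi / 2 * y)))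

lemma fold_arg_mem (y : ℝ) : 2 / Real.pi * Real.arcsin (Real.sin (Real.pi / 2 * y)) ∈ Set.Icc (-1:ℝ) 1 := by
  have h1 := Real.neg_pi_div_two_le_arcsin (Real.sin (Real.pi / 2 * y))
  have h2 := Real.arcsin_le_pi_div_two (Real.sin (Real.pi / 2 * y))
  have hpi := Real.pi_pos
  rw [div_mul_eq_mul_div]
  constructor
  · rw [le_div_iff₀ hpi]; linarith
  · rw [div_le_iff₀ hpi]; linarith

lemma fold_continuous {ρ₀ : ℝ → ℝ} (h : ContinuousOn ρ₀ (Set.Icc (-1) 1)) : Continuous (fold ρ₀) :=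
  h.comp_continuous (by fun_prop) fold_arg_mem

lemma fold_periodic (ρ₀ : ℝ → ℝ) (y : ℝ) (m : ℤ) : fold ρ₀ (y + 4 * m) = fold ρ₀ y := by
  unfold fold
  have : Real.pi / 2 * (y + 4 * m) = Real.pi / 2 * y + m * (2 * Real.pi) := by ring
  rw [this, Real.sin_add_int_mul_two_pi]

lemma fold_of_mem (ρ₀ : ℝ → ℝ) {y : ℝ} (hy : y ∈ Set.Icc (-1:ℝ) 1) : fold ρ₀ y = ρ₀ y := by
  have hpi := Real.pi_pos
  unfold fold
  rw [Real.arcsin_sin]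
  · congr 1; field_simp
  · nlinarith [hy.1]
  · nlinarith [hy.2]

lemma fold_reflect (ρ₀ : ℝ → ℝ) (y : ℝ) : fold ρ₀ (2 - y) = fold ρ₀ y := by
  unfold fold
  have : Real.pi / 2 * (2 - y) = Real.pi - Real.pi / 2 * y := by ring
  rw [this, Real.sin_pi_sub]

lemma gk_integrable {t : ℝ} (ht : 0 < t) (x : ℝ) : Integrable (fun y => gk t (x - y)) := by
  have h := (integrable_exp_neg_mul_sq (b := 1 / (2 * t)) (by positivity)).div_const (√(2 * Real.pi * t))
  have h2 := h.comp_sub_left x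
  refine h2.congr (Eventually.of_forall fun y => ?_)
  simp only [gk]
  congr 2; ring

lemma HH_density {φ : ℝ → ℝ} {t : ℝ} (ht : 0 < t) (x : ℝ) :
    HH φ t x = ∫ y, gk t (x - y) * φ y := by
  have hst : 0 < √t := Real.sqrt_pos.2 ht
  unfold HH
  rw [gauss_integral_eq]
  have h1 : ∀ z : ℝ, (√(2 * Real.pi))⁻¹ * Real.exp (-z ^ 2 / 2) * φ (x + √t * z) =
      √t * (fun w => gk t (x - (x + w)) * φ (x + w)) (√t * z) := by
    intro z
    simp only [gk]
    have e1 : -(x - (x + √t * z)) ^ 2 / (2 * t) = -z ^ 2 / 2 := by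
      have : -(x - (x + √t * z)) ^ 2 = -(√t ^ 2 * z ^ 2) := by ring
      rw [this, Real.sq_sqrt ht.le]; field_simp
    rw [e1, Real.sqrt_mul (by positivity : (0:ℝ) ≤ 2 * Real.pi) t]
    field_simp
  simp_rw [h1]
  rw [integral_const_mul, Measure.integral_comp_mul_left (fun w => gk t (x - (x + w)) * φ (x + w)) (√t),
    integral_add_left_eq_self (fun w => gk t (x - w) * φ w), abs_of_pos (inv_pos.2 hst), smul_eq_mul, ← mul_assoc,
    mul_inv_cancel₀ hst.ne', one_mul]

lemma hasSum_tile {f : ℝ → ℝ} (hf : Integrable f) :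
    HasSum (fun n : ℤ => ∫ y in (-1 + 4 * (n:ℝ))..(3 + 4 * n), f y) (∫ y, f y) := by
  have h := (hf.comp_mul_left' (R := 4) (by norm_num)).hasSum_intervalIntegral (-1/4)
  rw [Measure.integral_comp_mul_left] at h
  have h2 := h.mul_left 4
  have e1 : (fun n : ℤ => ∫ y in (-1 + 4 * (n:ℝ))..(3 + 4 * n), f y) =
      fun i : ℤ => 4 * ∫ x in (-1/4 + (i:ℝ))..(-1/4 + i + 1), f (4 * x) := by
    funext n
    rw [intervalIntegral.integral_comp_mul_left f (by norm_num : (4:ℝ) ≠ 0), smul_eq_mul, ← mul_assoc,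
      mul_inv_cancel₀ (by norm_num : (4:ℝ) ≠ 0), one_mul]
    congr 1 <;> ring
  have e2 : 4 * (|(4:ℝ)⁻¹| • ∫ y, f y) = ∫ y, f y := by
    rw [abs_of_pos (by norm_num), smul_eq_mul]; ring
  rw [e2] at h2
  rw [e1]
  exact h2

lemma P_interior (t x : ℝ) {r : ℝ} (hr : r ∈ Set.Ioc (-1:ℝ) 1) :
    P t x r = ∑' n : ℤ, (gk t (x - (r + 4 * n)) + gk t (x - (2 - r + 4 * n))) := by
  unfold P
  split_ifs with h
  · have h1 : r = 1 := by
      rcases h with h | h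
      · exact h
      · exact absurd h hr.1.ne'
    subst h1
    refine tsum_congr fun n => ?_
    rw [show (2:ℝ) - 1 = 1 by norm_num, two_mul]; rfl
  · rfl

lemma initial_eq {ρ₀ : ℝ → ℝ} (hc : ContinuousOn ρ₀ (Set.Icc (-1) 1))
    (h01 : ∀ r ∈ Set.Icc (-1 : ℝ) 1, ρ₀ r ∈ Set.Icc (0 : ℝ) 1) {t : ℝ} (ht : 0 < t) (x : ℝ) :
    ∫ r in (-1:ℝ)..1, P t x r * ρ₀ r = HH (fold ρ₀) t x := by
  rw [HH_density ht]
  set f : ℝ → ℝ := fun y => gk t (x - y) * fold ρ₀ y with hf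
  have hfc := fold_continuous hc
  have hgc := gk_continuous t
  have hfcont : Continuous f := by fun_prop
  have hfold01 : ∀ y, fold ρ₀ y ∈ Set.Icc (0:ℝ) 1 := fun y => h01 _ (fold_arg_mem y)
  have hf0 : ∀ y, 0 ≤ f y := fun y => mul_nonneg (gk_nonneg _ _) (hfold01 y).1
  have hfi : Integrable f := by
    refine (gk_integrable ht x).mono' hfcont.aestronglyMeasurable (Eventually.of_forall fun y => ?_)
    rw [Real.norm_of_nonneg (hf0 y)]
    simp only [hf]
    exact mul_le_of_le_one_right (gk_nonneg _ _) (hfold01 y).2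
  have htile := hasSum_tile hfi
  have hpart : ∀ n : ℤ, ∫ y in (-1 + 4 * (n:ℝ))..(3 + 4 * n), f y =
      ∫ r in Set.Ioc (-1:ℝ) 1, (f (r + 4 * n) + f (2 - r + 4 * n)) := by
    intro n
    rw [← intervalIntegral.integral_of_le (by norm_num)]
    have c1 : Continuous fun r : ℝ => f (r + 4 * n) := by fun_prop
    have c2 : Continuous fun r : ℝ => f (2 - r + 4 * n) := by fun_prop
    rw [intervalIntegral.integral_add (c1.intervalIntegrable _ _) (c2.intervalIntegrable _ _),
      intervalIntegral.integral_comp_add_right f,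
      intervalIntegral.integral_comp_sub_left (fun r => f (r + 4 * n)) 2,
      intervalIntegral.integral_comp_add_right f,
      show (2:ℝ) - 1 = 1 by norm_num, show (2:ℝ) - -1 = 3 by norm_num,
      intervalIntegral.integral_add_adjacent_intervals (hfcont.intervalIntegrable _ _) (hfcont.intervalIntegrable _ _)]
  simp_rw [hpart] at htile
  have hs := hasSum_integral_of_summable_integral_norm (μ := volume.restrict (Set.Ioc (-1:ℝ) 1))
    (F := fun (n : ℤ) r => f (r + 4 * n) + f (2 - r + 4 * n)) ?_ ?_
  · rw [← htile.unique hs |>.symm, intervalIntegral.integral_of_le (by norm_num)]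
    refine setIntegral_congr_fun measurableSet_Ioc fun r hr => ?_
    have hr' : r ∈ Set.Icc (-1:ℝ) 1 := ⟨hr.1.le, hr.2⟩
    rw [P_interior t x hr, ← tsum_mul_right]
    refine tsum_congr fun n => ?_
    simp only [hf, fold_periodic, fold_reflect, fold_of_mem ρ₀ hr']
    ring
  · intro n
    have c1 : Continuous fun r : ℝ => f (r + 4 * n) + f (2 - r + 4 * n) := by fun_prop
    exact (c1.integrableOn_Icc).mono_set Set.Ioc_subset_Icc_self
  · refine htile.summable.congr fun n => ?_
    refine integral_congr_ae (Eventually.of_forall fun r => ?_)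
    simp only
    rw [Real.norm_of_nonneg (add_nonneg (hf0 _) (hf0 _))]

lemma translate {ρ₀ : ℝ → ℝ} (hc : ContinuousOn ρ₀ (Set.Icc (-1) 1))
    (h01 : ∀ r ∈ Set.Icc (-1 : ℝ) 1, ρ₀ r ∈ Set.Icc (0 : ℝ) 1) {j : ℝ} (hj : 0 < j) (K : ℕ) {T : ℝ}
    {v V : ℝ → ℝ × ℝ} (hV : Continuous V) (hvV : ∀ t ∈ Set.Icc 0 T, v t = V t)
    (hv : ∀ t ∈ Set.Icc (0 : ℝ) T, (v t).1 ∈ Set.Icc (0 : ℝ) 1 ∧ (v t).2 ∈ Set.Icc (0 : ℝ) 1)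
    {t : ℝ} (ht : t ∈ Set.Ioc 0 T) (x : ℝ) :
    (∫ r in (-1 : ℝ)..1, P t x r * ρ₀ r)
            + j / 2 * ∫ s in (0 : ℝ)..t,
                (P s x 1 * (1 - ((v (t - s)).1) ^ K)
                  - P s x (-1) * (1 - (1 - (v (t - s)).2) ^ K)) = fld (fold ρ₀) j K V t x := by
  rw [initial_eq hc h01 ht.1]
  unfold fld FF
  rw [add_sub_assoc]
  congr 1
  unfold SS
  rw [← intervalIntegral.integral_sub
    (SS_intervalIntegrable (src_cont hV) (src_bdd hj) _ _ _ le_rfl ht.1.le)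
    (SS_intervalIntegrable (snk_cont hV) (snk_bdd hj) _ _ _ le_rfl ht.1.le),
    ← intervalIntegral.integral_const_mul]
  refine intervalIntegral.integral_congr fun s hs => ?_
  rw [Set.uIcc_of_le ht.1.le] at hs
  have hm : t - s ∈ Set.Icc 0 T := ⟨by linarith [hs.2], by linarith [hs.1, ht.2]⟩
  have h1 := hv _ hm
  rw [hvV _ hm] at h1
  simp only [src, snk]
  rw [P_one, P_neg_one, hvV _ hm, cl_of_mem h1.1, cl_of_mem h1.2]
  ring

end BSW

/-- Well-posedness of the boundary system: given `j > 0`, an integer `K ≥ 1`,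
`T > 0` and a continuous initial datum `ρ₀ : [−1,1] → [0,1]`, there is exactly one
pair `(u₊,u₋)` of continuous functions `[0,T] → [0,1]²` satisfying, for `t ∈ (0,T]`,
`u_±(t) = ∫_{−1}^{1} P_t(±1,r)ρ₀(r)dr
  + (j/2)∫_0^t {P_s(±1,1)(1 − u₊(t−s)^K) − P_s(±1,−1)(1 − (1 − u₋(t−s))^K)} ds`.
(The pair is encoded as `u : ℝ → ℝ × ℝ`; uniqueness holds on `[0,T]`.) -/
theorem boundary_system_wellposed (j : ℝ) (hj : 0 < j) (K : ℕ) (hK : 1 ≤ K)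
    (T : ℝ) (hT : 0 < T) (ρ₀ : ℝ → ℝ)
    (hρ₀c : ContinuousOn ρ₀ (Set.Icc (-1 : ℝ) 1))
    (hρ₀01 : ∀ r ∈ Set.Icc (-1 : ℝ) 1, ρ₀ r ∈ Set.Icc (0 : ℝ) 1) :
    ∃ u : ℝ → ℝ × ℝ,
      (ContinuousOn u (Set.Icc 0 T) ∧
        (∀ t ∈ Set.Icc (0 : ℝ) T, (u t).1 ∈ Set.Icc (0 : ℝ) 1 ∧ (u t).2 ∈ Set.Icc (0 : ℝ) 1) ∧
        (∀ t ∈ Set.Ioc (0 : ℝ) T,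
          (u t).1 = (∫ r in (-1 : ℝ)..1, P t 1 r * ρ₀ r)
            + j / 2 * ∫ s in (0 : ℝ)..t,
                (P s 1 1 * (1 - ((u (t - s)).1) ^ K)
                  - P s 1 (-1) * (1 - (1 - (u (t - s)).2) ^ K)) ∧
          (u t).2 = (∫ r in (-1 : ℝ)..1, P t (-1) r * ρ₀ r)
            + j / 2 * ∫ s in (0 : ℝ)..t,
                (P s (-1) 1 * (1 - ((u (t - s)).1) ^ K)
                  - P s (-1) (-1) * (1 - (1 - (u (t - s)).2) ^ K)))) ∧
      ∀ v : ℝ → ℝ × ℝ,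
        (ContinuousOn v (Set.Icc 0 T) ∧
          (∀ t ∈ Set.Icc (0 : ℝ) T, (v t).1 ∈ Set.Icc (0 : ℝ) 1 ∧ (v t).2 ∈ Set.Icc (0 : ℝ) 1) ∧
          (∀ t ∈ Set.Ioc (0 : ℝ) T,
            (v t).1 = (∫ r in (-1 : ℝ)..1, P t 1 r * ρ₀ r)
              + j / 2 * ∫ s in (0 : ℝ)..t,
                  (P s 1 1 * (1 - ((v (t - s)).1) ^ K)
                    - P s 1 (-1) * (1 - (1 - (v (t - s)).2) ^ K)) ∧
            (v t).2 = (∫ r in (-1 : ℝ)..1, P t (-1) r * ρ₀ r)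
              + j / 2 * ∫ s in (0 : ℝ)..t,
                  (P s (-1) 1 * (1 - ((v (t - s)).1) ^ K)
                    - P s (-1) (-1) * (1 - (1 - (v (t - s)).2) ^ K)))) →
        ∀ t ∈ Set.Icc (0 : ℝ) T, v t = u t := by
  classical
  have hφ := BSW.fold_continuous hρ₀c
  have hφ01 : ∀ y, BSW.fold ρ₀ y ∈ Set.Icc (0:ℝ) 1 := fun y => hρ₀01 _ (BSW.fold_arg_mem y)
  have hφM : ∀ y, |BSW.fold ρ₀ y| ≤ 1 := fun y => by
    rw [abs_of_nonneg (hφ01 y).1]; exact (hφ01 y).2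
  obtain ⟨U, hU, hfix⟩ := BSW.exists_fixed hφ hφM hj K hT
  have hb := BSW.fld_bounds hφ hφ01 (BSW.fold_periodic ρ₀) hj hT hU hfix
  have hU01 : ∀ t ∈ Set.Icc (0 : ℝ) T, (U t).1 ∈ Set.Icc (0 : ℝ) 1 ∧ (U t).2 ∈ Set.Icc (0 : ℝ) 1 := by
    intro t ht
    rw [hfix t ht]
    exact ⟨hb t ht 1, hb t ht (-1)⟩
  refine ⟨U, ⟨hU.continuousOn, hU01, ?_⟩, ?_⟩
  · intro t ht
    have ht' : t ∈ Set.Icc (0:ℝ) T := ⟨ht.1.le, ht.2⟩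
    rw [BSW.translate hρ₀c hρ₀01 hj K hU (fun _ _ => rfl) hU01 ht 1,
      BSW.translate hρ₀c hρ₀01 hj K hU (fun _ _ => rfl) hU01 ht (-1)]
    have := hfix t ht'
    exact ⟨congrArg Prod.fst this, congrArg Prod.snd this⟩
  · rintro v ⟨hvc, hv01, hveq⟩
    let V : ℝ → ℝ × ℝ := Set.IccExtend hT.le ((Set.Icc 0 T).restrict v)
    have hV : Continuous V := (continuousOn_iff_continuous_restrict.1 hvc).Icc_extend'
    have hvV : ∀ t ∈ Set.Icc 0 T, v t = V t := by
      intro t ht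
      simp only [V]
      rw [Set.IccExtend_of_mem _ _ ht]
      rfl
    have hVfix : ∀ t ∈ Set.Icc 0 T, V t = (BSW.fld (BSW.fold ρ₀) j K V t 1, BSW.fld (BSW.fold ρ₀) j K V t (-1)) := by
      have heq : Set.EqOn V (fun t => (BSW.fld (BSW.fold ρ₀) j K V t 1, BSW.fld (BSW.fold ρ₀) j K V t (-1)))
          (Set.Ioc 0 T) := by
        intro t ht
        have h := hveq t ht
        rw [BSW.translate hρ₀c hρ₀01 hj K hV hvV hv01 ht 1,
          BSW.translate hρ₀c hρ₀01 hj K hV hvV hv01 ht (-1), hvV t ⟨ht.1.le, ht.2⟩] at h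
        exact Prod.ext h.1 h.2
      refine heq.of_subset_closure hV.continuousOn
        ((BSW.fld_continuousOn hφ hφM hj K hV hT 1).prodMk (BSW.fld_continuousOn hφ hφM hj K hV hT (-1)))
        Set.Ioc_subset_Icc_self ?_
      rw [closure_Ioc hT.ne]
    obtain ⟨μ, hμ, hcon⟩ := BSW.fld_contraction (BSW.fold ρ₀) j hj K T hT
    have hiter : ∀ n : ℕ, ∀ τ ∈ Set.Icc 0 T, |(V τ).1 - (U τ).1| ≤ (1 / 2) ^ n * Real.exp (μ * τ) ∧
        |(V τ).2 - (U τ).2| ≤ (1 / 2) ^ n * Real.exp (μ * τ) := by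
      intro n
      induction n with
      | zero =>
        intro τ hτ
        have h1 := hU01 τ hτ
        have h2 := hv01 τ hτ
        rw [hvV τ hτ] at h2
        have h3 : 1 ≤ Real.exp (μ * τ) := Real.one_le_exp (mul_nonneg hμ.le hτ.1)
        rw [pow_zero, one_mul]
        constructor
        · refine le_trans ?_ h3
          rw [abs_le]; constructor <;> linarith [h1.1.1, h1.1.2, h2.1.1, h2.1.2]
        · refine le_trans ?_ h3
          rw [abs_le]; constructor <;> linarith [h1.2.1, h1.2.2, h2.2.1, h2.2.2]
      | succ n ih =>
        intro τ hτ
        have h := hcon V U hV hU _ (by positivity) ih τ hτ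
        rw [hVfix τ hτ, hfix τ hτ, pow_succ']
        have h1 := h 1
        have h2 := h (-1)
        rw [← mul_assoc] at h1 h2
        exact ⟨h1, h2⟩
    have hzero : ∀ a E : ℝ, (∀ n : ℕ, |a| ≤ (1 / 2) ^ n * E) → a = 0 := by
      intro a E h
      have hl : Filter.Tendsto (fun n : ℕ => (1 / 2 : ℝ) ^ n * E) Filter.atTop (nhds (0 * E)) :=
        (tendsto_pow_atTop_nhds_zero_of_lt_one (by norm_num) (by norm_num)).mul_const E
      rw [zero_mul] at hl
      have := ge_of_tendsto' hl h
      exact abs_eq_zero.1 (le_antisymm this (abs_nonneg a))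
    intro t ht
    rw [hvV t ht]
    have h1 := hzero _ _ fun n => (hiter n t ht).1
    have h2 := hzero _ _ fun n => (hiter n t ht).2
    exact Prod.ext (sub_eq_zero.1 h1) (sub_eq_zero.1 h2)
end

section
/- (Monotonicity of the macroscopic equation.) Let j > 0 and K ≥ 1 an integer. Let ρ₀, ρ̃₀ : [−1,1] → [0,1] be bounded measurable with ρ₀(r) ≤ ρ̃₀(r) for all r ∈ [−1,1], and let ρ and ρ̃ be solutions of the macroscopic integral equation with initial data ρ₀ and ρ̃₀ respectively, whose boundary traces t ↦ (ρ(±1,t)) and t ↦ (ρ̃(±1,t)) are continuous. Then ρ(r,t) ≤ ρ̃(r,t) for all r ∈ [−1,1] and all t ≥ 0. -/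
open MeasureTheory

/-- `ρ : [−1,1] × [0,∞) → [0,1]` (encoded as `ρ : ℝ → ℝ → ℝ`, first argument the
space variable) is a bounded measurable solution of the macroscopic integral
equation with initial datum `ρ₀ : [−1,1] → [0,1]`: it takes values in `[0,1]`,
agrees with `ρ₀` at time `0`, and for all `t > 0`, `r ∈ [−1,1]`,
`ρ(r,t) = ∫_{−1}^{1} P_t(r,r')ρ₀(r')dr'
  + (j/2)∫_0^t [P_s(r,1)(1 − ρ(1,t−s)^K) − P_s(r,−1)(1 − (1 − ρ(−1,t−s))^K)] ds`. -/
def IsMacroSolution (j : ℝ) (K : ℕ) (ρ₀ : ℝ → ℝ) (ρ : ℝ → ℝ → ℝ) : Prop :=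
  Measurable (Function.uncurry ρ) ∧
  (∀ r ∈ Set.Icc (-1 : ℝ) 1, ∀ t : ℝ, 0 ≤ t → ρ r t ∈ Set.Icc (0 : ℝ) 1) ∧
  (∀ r ∈ Set.Icc (-1 : ℝ) 1, ρ r 0 = ρ₀ r) ∧
  (∀ t : ℝ, 0 < t → ∀ r ∈ Set.Icc (-1 : ℝ) 1,
    ρ r t = (∫ r' in (-1 : ℝ)..1, P t r r' * ρ₀ r')
      + j / 2 * ∫ s in (0 : ℝ)..t,
          (P s r 1 * (1 - (ρ 1 (t - s)) ^ K)
            - P s r (-1) * (1 - (1 - ρ (-1) (t - s)) ^ K)))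

open Set Filter Topology

/-- One-variable Gaussian. -/
noncomputable def gk (t x : ℝ) : ℝ := Real.exp (-x ^ 2 / (2 * t)) / Real.sqrt (2 * Real.pi * t)

/-- Periodised Gaussian of period `4`. -/
noncomputable def Qk (t x : ℝ) : ℝ := ∑' n : ℤ, gk t (x + 4 * n)

lemma gk_nonneg (t x : ℝ) : 0 ≤ gk t x := by unfold gk; positivity

lemma gk_neg (t x : ℝ) : gk t (-x) = gk t x := by unfold gk; simp

lemma gk_theta {t : ℝ} (ht : 0 < t) (x : ℝ) (n : ℤ) :
    ((gk t (x + 4 * n) : ℝ) : ℂ) = (gk t x : ℂ) *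
      jacobiTheta₂_term n (2 * Complex.I * x / (Real.pi * t)) (8 * Complex.I / (Real.pi * t)) := by
  have hpi : (Real.pi : ℂ) ≠ 0 := by exact_mod_cast Real.pi_ne_zero
  have ht' : (t : ℂ) ≠ 0 := by exact_mod_cast ht.ne'
  unfold gk jacobiTheta₂_term
  push_cast
  rw [div_mul_eq_mul_div, ← Complex.exp_add]
  congr 2
  have hI : Complex.I ^ 2 = -1 := Complex.I_sq
  field_simp
  rw [hI]
  ring

lemma tau_im {t : ℝ} (ht : 0 < t) : 0 < (8 * Complex.I / (Real.pi * t) : ℂ).im := by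
  have : (8 * Complex.I / (Real.pi * t) : ℂ) = ((8 / (Real.pi * t) : ℝ) : ℂ) * Complex.I := by
    push_cast; ring
  rw [this, Complex.mul_I_im, Complex.ofReal_re]
  have := Real.pi_pos
  positivity

lemma gk_hasSum {t : ℝ} (ht : 0 < t) (x : ℝ) :
    HasSum (fun n : ℤ => ((gk t (x + 4 * n) : ℝ) : ℂ)) ((gk t x : ℂ) *
      jacobiTheta₂ (2 * Complex.I * x / (Real.pi * t)) (8 * Complex.I / (Real.pi * t))) := by
  simp_rw [gk_theta ht]
  exact (hasSum_jacobiTheta₂_term _ (tau_im ht)).mul_left _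

lemma gk_summable {t : ℝ} (ht : 0 < t) (x : ℝ) :
    Summable (fun n : ℤ => gk t (x + 4 * n)) :=
  Complex.summable_ofReal.1 (gk_hasSum ht x).summable

lemma Qk_eq {t : ℝ} (ht : 0 < t) (x : ℝ) :
    Qk t x = ((gk t x : ℂ) *
      jacobiTheta₂ (2 * Complex.I * x / (Real.pi * t)) (8 * Complex.I / (Real.pi * t))).re := by
  rw [← (gk_hasSum ht x).tsum_eq, ← Complex.ofReal_tsum, Complex.ofReal_re]; rfl

lemma Qk_cont : ContinuousOn (fun p : ℝ × ℝ => Qk p.1 p.2) (Ioi 0 ×ˢ univ) := by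
  have key : ContinuousOn (fun p : ℝ × ℝ => ((gk p.1 p.2 : ℂ) *
      jacobiTheta₂ (2 * Complex.I * p.2 / (Real.pi * p.1))
        (8 * Complex.I / (Real.pi * p.1))).re) (Ioi 0 ×ˢ univ) := by
    rintro ⟨t, x⟩ ⟨ht, -⟩
    have ht : 0 < t := ht
    apply ContinuousAt.continuousWithinAt
    have hpi : (Real.pi : ℂ) ≠ 0 := by exact_mod_cast Real.pi_ne_zero
    have ht' : (t : ℂ) ≠ 0 := by exact_mod_cast ht.ne'
    have h1 : ContinuousAt (fun p : ℝ × ℝ => gk p.1 p.2) (t, x) := by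
      unfold gk
      have : Real.sqrt (2 * Real.pi * t) ≠ 0 := by
        have := Real.pi_pos
        positivity
      have h2 : 2 * t ≠ 0 := by positivity
      apply ContinuousAt.div
      · apply ContinuousAt.rexp
        apply ContinuousAt.div <;> first | fun_prop | exact h2
      · fun_prop
      · exact this
    have h2 : ContinuousAt (fun p : ℝ × ℝ =>
        ((2 * Complex.I * p.2 / (Real.pi * p.1) : ℂ), (8 * Complex.I / (Real.pi * p.1) : ℂ))) (t, x) := by
      apply ContinuousAt.prodMk
      · apply ContinuousAt.div
        · fun_prop
        · fun_prop
        · exact mul_ne_zero hpi ht'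
      · apply ContinuousAt.div
        · fun_prop
        · fun_prop
        · exact mul_ne_zero hpi ht'
    have h3 := ContinuousAt.comp (f := fun p : ℝ × ℝ =>
        ((2 * Complex.I * p.2 / (Real.pi * p.1) : ℂ), (8 * Complex.I / (Real.pi * p.1) : ℂ)))
        (g := fun p : ℂ × ℂ => jacobiTheta₂ p.1 p.2) (x := (t, x))
        (continuousAt_jacobiTheta₂ _ (tau_im ht)) h2
    exact Complex.continuous_re.continuousAt.comp
      ((Complex.continuous_ofReal.continuousAt.comp h1).mul h3)
  refine key.congr ?_
  rintro ⟨t, x⟩ ⟨ht, -⟩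
  exact Qk_eq ht x

lemma Qk_cont_x {t : ℝ} (ht : 0 < t) : Continuous (Qk t) := by
  have : Continuous (fun x : ℝ => (fun p : ℝ × ℝ => Qk p.1 p.2) (t, x)) :=
    Qk_cont.comp_continuous (by fun_prop) (fun x => ⟨ht, trivial⟩)
  exact this

lemma Qk_nonneg (t x : ℝ) : 0 ≤ Qk t x := tsum_nonneg fun _ => gk_nonneg _ _

lemma Qk_periodic (t x : ℝ) : Qk t (x + 4) = Qk t x := by
  unfold Qk
  rw [← (Equiv.addRight (1 : ℤ)).tsum_eq (fun n : ℤ => gk t (x + 4 * n))]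
  congr 1; ext n; simp; ring_nf

lemma Qk_neg (t x : ℝ) : Qk t (-x) = Qk t x := by
  unfold Qk
  rw [← (Equiv.neg ℤ).tsum_eq (fun n : ℤ => gk t (-x + 4 * n))]
  congr 1; ext n
  rw [← gk_neg]; simp; ring_nf

lemma Qk_neg_sum (t x : ℝ) : ∑' n : ℤ, gk t (x - 4 * n) = Qk t x := by
  unfold Qk
  rw [← (Equiv.neg ℤ).tsum_eq (fun n : ℤ => gk t (x + 4 * n))]
  congr 1; ext n
  simp; ring_nf

lemma P_eq {t : ℝ} (ht : 0 < t) (r r' : ℝ) : P t r r' = Qk t (r - r') + Qk t (r + r' - 2) := by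
  have hG : ∀ a b : ℝ, G t a b = gk t (a - b) := fun _ _ => rfl
  have e1 : ∀ n : ℤ, G t r (r' + 4 * n) = gk t ((r - r') - 4 * n) := fun n => by
    rw [hG]; ring_nf
  have e2 : ∀ n : ℤ, G t r (2 - r' + 4 * n) = gk t ((r + r' - 2) - 4 * n) := fun n => by
    rw [hG]; ring_nf
  have hs : ∀ x : ℝ, Summable (fun n : ℤ => gk t (x - 4 * n)) := fun x => by
    refine ((Equiv.neg ℤ).summable_iff (f := fun n : ℤ => gk t (x - 4 * n))).1 ?_
    refine (gk_summable ht x).congr fun n => ?_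
    simp
  unfold P
  split_ifs with h
  · simp_rw [e1]
    rw [tsum_mul_left, Qk_neg_sum, two_mul]
    congr 1
    rcases h with h | h
    · rw [h]; ring_nf
    · rw [h, ← Qk_periodic t (r + -1 - 2)]; ring_nf
  · simp_rw [e1, e2]
    rw [(hs _).tsum_add (hs _), Qk_neg_sum, Qk_neg_sum]

lemma P_nonneg {t : ℝ} (ht : 0 < t) (r r' : ℝ) : 0 ≤ P t r r' := by
  rw [P_eq ht]; exact add_nonneg (Qk_nonneg _ _) (Qk_nonneg _ _)

lemma P_cont : ContinuousOn (fun p : ℝ × ℝ × ℝ => P p.1 p.2.1 p.2.2) (Ioi 0 ×ˢ univ) := by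
  have : ContinuousOn (fun p : ℝ × ℝ × ℝ => Qk p.1 (p.2.1 - p.2.2) + Qk p.1 (p.2.1 + p.2.2 - 2))
      (Ioi 0 ×ˢ univ) := by
    apply ContinuousOn.add
    · exact Qk_cont.comp (f := fun p : ℝ × ℝ × ℝ => (p.1, p.2.1 - p.2.2)) (by fun_prop)
        (fun p hp => ⟨hp.1, trivial⟩)
    · exact Qk_cont.comp (f := fun p : ℝ × ℝ × ℝ => (p.1, p.2.1 + p.2.2 - 2)) (by fun_prop)
        (fun p hp => ⟨hp.1, trivial⟩)
  exact this.congr fun p hp => P_eq hp.1 _ _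

lemma Qk_bound {T : ℝ} (hT : 0 < T) : ∃ C : ℝ, 0 ≤ C ∧ ∀ t, 0 < t → t ≤ T → ∀ x, |x| ≤ 2 →
    Qk t x ≤ C * (Real.exp (-x ^ 2 / (4 * t)) / Real.sqrt t) := by
  have hs : Summable (fun n : ℤ => Real.exp (-(n : ℝ) ^ 2 / T)) := by
    have h8 : 0 < 8 * T := by positivity
    have := (gk_summable h8 0).mul_left (Real.sqrt (2 * Real.pi * (8 * T)))
    refine this.congr fun n => ?_
    unfold gk
    have h : Real.sqrt (2 * Real.pi * (8 * T)) ≠ 0 := by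
      have := Real.pi_pos
      positivity
    rw [mul_div_cancel₀ _ h]
    congr 1
    field_simp
    ring
  refine ⟨∑' n : ℤ, Real.exp (-(n : ℝ) ^ 2 / T), tsum_nonneg fun _ => (Real.exp_pos _).le, ?_⟩
  intro t ht htT x hx
  rw [← tsum_mul_right]
  refine (gk_summable ht x).tsum_le_tsum ?_ (hs.mul_right _)
  intro n
  rw [abs_le] at hx
  have e1 : -(x + 4 * n) ^ 2 / (2 * t) ≤ -(n : ℝ) ^ 2 / T + -x ^ 2 / (4 * t) := by
    have h1 : x ^ 2 / 2 + 2 * (n : ℝ) ^ 2 ≤ (x + 4 * n) ^ 2 := by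
      rcases lt_trichotomy n 0 with h | h | h
      · have : (n : ℝ) ≤ -1 := by exact_mod_cast Int.le_sub_one_of_lt h
        nlinarith [mul_nonneg (by linarith : 0 ≤ -(x + 2 * n)) (by linarith : 0 ≤ -(n : ℝ)), sq_nonneg (n : ℝ), sq_nonneg x]
      · subst h; simp; nlinarith [sq_nonneg x]
      · have : (1 : ℝ) ≤ n := by exact_mod_cast h
        nlinarith [mul_nonneg (by linarith : 0 ≤ (x + 2 * n)) (by linarith : 0 ≤ (n : ℝ)), sq_nonneg (n : ℝ), sq_nonneg x]
    have h2 : (n : ℝ) ^ 2 / T ≤ (n : ℝ) ^ 2 / t := by gcongr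
    have h3 : (x ^ 2 / 2 + 2 * (n : ℝ) ^ 2) / (2 * t) ≤ (x + 4 * n) ^ 2 / (2 * t) := by gcongr
    have h4 : (x ^ 2 / 2 + 2 * (n : ℝ) ^ 2) / (2 * t) = (n : ℝ) ^ 2 / t + x ^ 2 / (4 * t) := by
      field_simp; ring
    rw [neg_div, neg_div, neg_div]
    linarith
  unfold gk
  rw [mul_div_assoc', ← Real.exp_add]
  gcongr
  nlinarith [Real.pi_gt_three]

lemma P_one {t : ℝ} (r : ℝ) : P t r 1 = 2 * Qk t (r - 1) := by
  unfold P
  rw [if_pos (Or.inl rfl), tsum_mul_left, ← Qk_neg_sum]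
  congr 2; ext n
  show gk t (r - (1 + 4 * n)) = _
  ring_nf

lemma P_neg_one {t : ℝ} (r : ℝ) : P t r (-1) = 2 * Qk t (r + 1) := by
  unfold P
  rw [if_pos (Or.inr rfl), tsum_mul_left, ← Qk_neg_sum]
  congr 2; ext n
  show gk t (r - (-1 + 4 * n)) = _
  ring_nf

lemma P_bound {T : ℝ} (hT : 0 < T) : ∃ C : ℝ, 0 ≤ C ∧ ∀ t, 0 < t → t ≤ T →
    ∀ r ∈ Icc (-1 : ℝ) 1, ∀ e : ℝ, e = 1 ∨ e = -1 →
    P t r e ≤ C * (Real.exp (-(r - e) ^ 2 / (4 * t)) / Real.sqrt t) := by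
  obtain ⟨C, hC, h⟩ := Qk_bound hT
  refine ⟨2 * C, by positivity, fun t ht htT r hr e he => ?_⟩
  rcases he with rfl | rfl
  · have := h t ht htT (r - 1) (abs_le.2 ⟨by linarith [hr.1], by linarith [hr.2]⟩)
    rw [P_one]; linarith
  · have := h t ht htT (r + 1) (abs_le.2 ⟨by linarith [hr.1], by linarith [hr.2]⟩)
    rw [P_neg_one, sub_neg_eq_add]; linarith

lemma gk_eq (t x : ℝ) : gk t x = Real.exp (-(1 / (2 * t)) * x ^ 2) / Real.sqrt (2 * Real.pi * t) := by
  unfold gk; congr 2; ring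

lemma gk_integrable {t : ℝ} (ht : 0 < t) : Integrable (gk t) := by
  have : Integrable (fun x : ℝ => Real.exp (-(1 / (2 * t)) * x ^ 2)) :=
    integrable_exp_neg_mul_sq (by positivity)
  have h2 := this.div_const (Real.sqrt (2 * Real.pi * t))
  exact h2.congr (Eventually.of_forall fun x => (gk_eq t x).symm)

lemma gk_integral {t : ℝ} (ht : 0 < t) : ∫ x, gk t x = 1 := by
  simp_rw [gk_eq]
  rw [integral_div, integral_gaussian]
  have hpi := Real.pi_pos
  rw [show Real.pi / (1 / (2 * t)) = 2 * Real.pi * t by field_simp]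
  exact div_self (by positivity)

lemma gk_continuous (t : ℝ) : Continuous (gk t) := by unfold gk; fun_prop

lemma gk_mul {h s : ℝ} (hh : 0 < h) (hs : 0 < s) (a b z : ℝ) :
    gk h (a - z) * gk s (z - b) =
      gk (h + s) (a - b) * gk (h * s / (h + s)) (z - (s * a + h * b) / (h + s)) := by
  have hpi := Real.pi_pos
  unfold gk
  rw [div_mul_div_comm, div_mul_div_comm, ← Real.exp_add, ← Real.exp_add,
    ← Real.sqrt_mul (by positivity), ← Real.sqrt_mul (by positivity)]
  have hsum : h + s ≠ 0 := by positivity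
  congr 1
  · congr 1
    field_simp
    ring
  · congr 1
    field_simp

lemma gk_mul_integrable {h s : ℝ} (hh : 0 < h) (hs : 0 < s) (a b : ℝ) :
    Integrable (fun z => gk h (a - z) * gk s (z - b)) := by
  simp_rw [gk_mul hh hs]
  exact ((gk_integrable (by positivity)).comp_sub_right _).const_mul _

lemma gk_conv {h s : ℝ} (hh : 0 < h) (hs : 0 < s) (a b : ℝ) :
    ∫ z, gk h (a - z) * gk s (z - b) = gk (h + s) (a - b) := by
  simp_rw [gk_mul hh hs]
  rw [integral_const_mul, integral_sub_right_eq_self (gk (h * s / (h + s))),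
    gk_integral (by positivity), mul_one]

lemma Qk_unfold {t : ℝ} (r : ℝ) (F : ℝ → ℝ) (hF : Continuous F) (hF0 : ∀ z, 0 ≤ F z)
    (hper : ∀ z, F (z + 4) = F z) (hgFi : Integrable (fun z => gk t (r - z) * F z)) :
    ∫ z in (-1 : ℝ)..3, Qk t (r - z) * F z = ∫ z, gk t (r - z) * F z := by
  have hperZ : ∀ (n : ℤ) z, F (z + 4 * n) = F z := by
    intro n z
    have : Function.Periodic F 4 := hper
    have h := this.int_mul n z
    rw [← h, mul_comm]
  set u : ℝ → ℝ := fun z => gk t (r - z) * F z with hu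
  have hucont : Continuous u := ((gk_continuous t).comp (by fun_prop)).mul hF
  set f : ℝ → ℝ := fun x => u (4 * x - 1) with hf
  have hfi : Integrable f :=
    (hgFi.comp_sub_right 1).comp_mul_left' (by norm_num : (4 : ℝ) ≠ 0)
  have hfint : ∫ x, f x = (1 / 4) * ∫ z, u z := by
    have h1 := Measure.integral_comp_mul_left (fun y => u (y - 1)) 4
    rw [integral_sub_right_eq_self u] at h1
    simp only [hf]
    rw [h1, smul_eq_mul, abs_of_pos (by norm_num)]; norm_num
  have hsum := hfi.hasSum_intervalIntegral_comp_add_int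
  have hfn : ∀ (n : ℤ) x, f (x + n) = gk t (r - (4 * x - 1) - 4 * n) * F (4 * x - 1) := by
    intro n x
    simp only [hf, hu]
    rw [show 4 * (x + (n : ℝ)) - 1 = (4 * x - 1) + 4 * n by ring, hperZ]
    congr 2; ring
  have h2 := hasSum_integral_of_summable_integral_norm (μ := volume.restrict (Ioc (0 : ℝ) 1))
    (F := fun (n : ℤ) x => f (x + n)) (fun n => (hfi.comp_add_right (n : ℝ)).restrict) (by
      refine hsum.summable.congr fun n => ?_
      rw [intervalIntegral.integral_of_le zero_le_one]
      refine integral_congr_ae (Eventually.of_forall fun x => ?_)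
      simp only [Real.norm_eq_abs]
      rw [abs_of_nonneg]
      exact mul_nonneg (gk_nonneg _ _) (hF0 _))
  have h3 : ∫ x in Ioc (0 : ℝ) 1, ∑' n : ℤ, f (x + n) = ∫ x, f x := by
    refine h2.unique ?_
    convert hsum using 2 with n
    rw [intervalIntegral.integral_of_le zero_le_one]
  have h4 : ∀ x, ∑' n : ℤ, f (x + n) = Qk t (r - (4 * x - 1)) * F (4 * x - 1) := by
    intro x
    simp_rw [hfn]
    rw [tsum_mul_right, Qk_neg_sum]
  simp_rw [h4] at h3
  rw [← intervalIntegral.integral_of_le zero_le_one,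
    intervalIntegral.integral_comp_mul_sub (fun z => Qk t (r - z) * F z) (by norm_num : (4:ℝ) ≠ 0) 1,
    hfint, smul_eq_mul] at h3
  norm_num at h3
  linarith

lemma P_unfold {t : ℝ} (ht : 0 < t) (r : ℝ) (F : ℝ → ℝ) (hF : Continuous F) (hF0 : ∀ z, 0 ≤ F z)
    (hper : ∀ z, F (z + 4) = F z) (hrefl : ∀ z, F (2 - z) = F z)
    (hgFi : Integrable (fun z => gk t (r - z) * F z)) :
    ∫ z in (-1 : ℝ)..1, P t r z * F z = ∫ z, gk t (r - z) * F z := by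
  rw [← Qk_unfold r F hF hF0 hper hgFi]
  have hc : Continuous fun z => Qk t (r - z) * F z := ((Qk_cont_x ht).comp (by fun_prop)).mul hF
  have hc2 : Continuous fun z => Qk t (r + z - 2) * F z := ((Qk_cont_x ht).comp (by fun_prop)).mul hF
  rw [← intervalIntegral.integral_add_adjacent_intervals (hc.intervalIntegrable (-1) 1)
    (hc.intervalIntegrable 1 3)]
  simp_rw [P_eq ht, add_mul]
  rw [intervalIntegral.integral_add (hc.intervalIntegrable _ _) (hc2.intervalIntegrable _ _)]
  congr 1
  have := intervalIntegral.integral_comp_sub_left (a := -1) (b := 1)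
    (fun z => Qk t (r - z) * F z) 2
  norm_num at this
  rw [← this]
  refine intervalIntegral.integral_congr fun z _ => ?_
  rw [hrefl]; ring_nf

lemma P_mass {t : ℝ} (ht : 0 < t) (r : ℝ) : ∫ z in (-1 : ℝ)..1, P t r z = 1 := by
  have h := P_unfold ht r (fun _ => 1) continuous_const (fun _ => zero_le_one) (fun _ => rfl)
    (fun _ => rfl) (by simpa using (gk_integrable ht).comp_sub_left r)
  simp only [mul_one] at h
  rw [h, integral_sub_left_eq_self (gk t), gk_integral ht]

lemma gQ_conv {h s : ℝ} (hh : 0 < h) (hs : 0 < s) (a b : ℝ) :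
    Integrable (fun z => gk h (a - z) * Qk s (z - b)) ∧
    ∫ z, gk h (a - z) * Qk s (z - b) = Qk (h + s) (a - b) := by
  have e : ∀ z, gk h (a - z) * Qk s (z - b) = ∑' n : ℤ, gk h (a - z) * gk s (z - (b + 4 * n)) := by
    intro z
    rw [tsum_mul_left, ← Qk_neg_sum]
    congr 2; ext n; ring_nf
  have hI : ∀ n : ℤ, ∫ z, gk h (a - z) * gk s (z - (b + 4 * n)) = gk (h + s) ((a - b) - 4 * n) := by
    intro n; rw [gk_conv hh hs]; ring_nf
  have hsum : Summable (fun n : ℤ => gk (h + s) ((a - b) - 4 * n)) := by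
    refine ((Equiv.neg ℤ).summable_iff (f := fun n : ℤ => gk (h + s) ((a - b) - 4 * n))).1 ?_
    refine (gk_summable (by positivity : 0 < h + s) (a - b)).congr fun n => ?_
    simp
  have hn : ∀ n : ℤ, ∫ z, ‖gk h (a - z) * gk s (z - (b + 4 * n))‖ = gk (h + s) ((a - b) - 4 * n) := by
    intro n
    rw [← hI]
    refine integral_congr_ae (Eventually.of_forall fun x => ?_)
    simp only [Real.norm_eq_abs]
    exact abs_of_nonneg (mul_nonneg (gk_nonneg _ _) (gk_nonneg _ _))
  constructor
  · have hQ := (gk_integrable hh).comp_sub_left a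
    obtain ⟨C, hC⟩ : ∃ C, ∀ z, ‖Qk s z‖ ≤ C := by
      have hp : Function.Periodic (Qk s) 4 := Qk_periodic s
      have := hp.isBounded_of_continuous (by norm_num) (Qk_cont_x hs)
      obtain ⟨C, hC⟩ := this.exists_norm_le
      exact ⟨C, fun z => hC _ ⟨z, rfl⟩⟩
    refine hQ.mul_bdd (c := C) ?_ ?_
    · exact ((Qk_cont_x hs).comp (by fun_prop)).aestronglyMeasurable
    · exact Eventually.of_forall fun z => hC _
  · simp_rw [e]
    rw [← integral_tsum_of_summable_integral_norm (fun n => gk_mul_integrable hh hs _ _)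
      (by simp_rw [hn]; exact hsum)]
    simp_rw [hI]
    exact Qk_neg_sum _ _

lemma P_CK {h s : ℝ} (hh : 0 < h) (hs : 0 < s) (r y : ℝ) :
    ∫ z in (-1 : ℝ)..1, P h r z * P s z y = P (h + s) r y := by
  obtain ⟨i1, e1⟩ := gQ_conv hh hs r y
  obtain ⟨i2, e2⟩ := gQ_conv hh hs r (2 - y)
  have hc : Continuous fun z => P s z y := by
    simp_rw [P_eq hs]
    exact ((Qk_cont_x hs).comp (by fun_prop)).add ((Qk_cont_x hs).comp (by fun_prop))
  have hP : ∀ z, gk h (r - z) * P s z y =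
      gk h (r - z) * Qk s (z - y) + gk h (r - z) * Qk s (z - (2 - y)) := by
    intro z; rw [P_eq hs, mul_add]; congr 3; ring
  rw [P_unfold hh r (fun z => P s z y) hc (fun z => P_nonneg hs _ _)]
  · simp_rw [hP]
    rw [integral_add i1 i2, e1, e2, P_eq (by positivity)]
    congr 2; ring
  · intro z
    rw [P_eq hs, P_eq hs, ← Qk_periodic s (z - y), ← Qk_periodic s (z + y - 2)]
    ring_nf
  · intro z
    rw [P_eq hs, P_eq hs, ← Qk_neg s (z - y), ← Qk_neg s (z + y - 2), add_comm]
    ring_nf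
  · simp_rw [hP]; exact i1.add i2

lemma P_contOn_s (r e : ℝ) : ContinuousOn (fun s => P s r e) (Ioi 0) :=
  P_cont.comp (f := fun s : ℝ => (s, r, e)) (by fun_prop) (fun s hs => ⟨hs, trivial⟩)

lemma P_cont_xy {h : ℝ} (hh : 0 < h) : Continuous (fun p : ℝ × ℝ => P h p.1 p.2) := by
  have : Continuous (fun p : ℝ × ℝ => (fun q : ℝ × ℝ × ℝ => P q.1 q.2.1 q.2.2) (h, p.1, p.2)) :=
    P_cont.comp_continuous (by fun_prop) (fun x => ⟨hh, trivial⟩)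
  exact this

lemma P_cont_y {h : ℝ} (hh : 0 < h) (r : ℝ) : Continuous (fun y => P h r y) :=
  (P_cont_xy hh).comp (f := fun y : ℝ => (r, y)) (by fun_prop)

lemma P_bdd {h : ℝ} (hh : 0 < h) : ∃ A : ℝ, 0 ≤ A ∧ ∀ r ∈ Icc (-1 : ℝ) 1, ∀ z ∈ Icc (-1 : ℝ) 1,
    |P h r z| ≤ A := by
  obtain ⟨A, hA⟩ := (isCompact_Icc.prod isCompact_Icc : IsCompact
    (Icc (-1 : ℝ) 1 ×ˢ Icc (-1 : ℝ) 1)).exists_bound_of_continuousOn (P_cont_xy hh).continuousOn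
  refine ⟨A, ?_, fun r hr z hz => hA (r, z) ⟨hr, hz⟩⟩
  exact (norm_nonneg _).trans (hA (0, 0) (by constructor <;> simp))

lemma inv_sqrt_int (T : ℝ) : IntervalIntegrable (fun s : ℝ => (Real.sqrt s)⁻¹) volume 0 T := by
  have h := intervalIntegral.intervalIntegrable_rpow' (a := 0) (b := T) (r := -(1 / 2 : ℝ)) (by norm_num)
  by_cases hT : 0 ≤ T
  · refine h.congr fun s hs => ?_
    rw [uIoc_of_le hT] at hs
    rw [Real.rpow_neg hs.1.le, Real.sqrt_eq_rpow]
  · have : IntervalIntegrable (fun _ : ℝ => (0 : ℝ)) volume 0 T := intervalIntegrable_const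
    refine this.congr fun s hs => ?_
    rw [uIoc_of_ge (le_of_not_ge hT)] at hs
    simp [Real.sqrt_eq_zero_of_nonpos hs.2]

lemma inv_sqrt_integral {T : ℝ} (hT : 0 ≤ T) : ∫ s in (0 : ℝ)..T, (Real.sqrt s)⁻¹ = 2 * Real.sqrt T := by
  have : ∫ s in (0 : ℝ)..T, (Real.sqrt s)⁻¹ = ∫ s in (0 : ℝ)..T, s ^ (-(1 / 2 : ℝ)) := by
    refine intervalIntegral.integral_congr fun s hs => ?_
    rw [uIcc_of_le hT] at hs
    rw [Real.rpow_neg hs.1, Real.sqrt_eq_rpow]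
  rw [this, integral_rpow (Or.inl (by norm_num)), Real.sqrt_eq_rpow]
  norm_num
  ring

lemma P_bound' {T : ℝ} (hT : 0 < T) : ∃ C : ℝ, 0 ≤ C ∧
    (∀ t, 0 < t → t ≤ T → ∀ r ∈ Icc (-1 : ℝ) 1, ∀ e : ℝ, e = 1 ∨ e = -1 →
      P t r e ≤ C * (Real.sqrt t)⁻¹) ∧
    (∀ δ, 0 < δ → ∃ C2, 0 ≤ C2 ∧ ∀ t, 0 < t → t ≤ T → ∀ r ∈ Icc (-1 : ℝ) 1,
      ∀ e : ℝ, e = 1 ∨ e = -1 → δ ≤ |r - e| → P t r e ≤ C2 * t) := by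
  obtain ⟨C, hC, h⟩ := P_bound hT
  refine ⟨C, hC, ?_, ?_⟩
  · intro t ht htT r hr e he
    refine (h t ht htT r hr e he).trans ?_
    rw [← one_div]
    gcongr
    rw [Real.exp_le_one_iff, neg_div, neg_nonpos]
    positivity
  · intro δ hδ
    refine ⟨C * (32 / δ ^ 4 * Real.sqrt T), by positivity, ?_⟩
    intro t ht htT r hr e he hd
    refine (h t ht htT r hr e he).trans ?_
    rw [mul_assoc]
    gcongr
    have hs : 0 < Real.sqrt t := Real.sqrt_pos.2 ht
    rw [div_le_iff₀ hs]
    set u := δ ^ 2 / (4 * t) with hu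
    have hu0 : 0 < u := by positivity
    have h1 : Real.exp (-(r - e) ^ 2 / (4 * t)) ≤ Real.exp (-u) := by
      rw [Real.exp_le_exp, neg_div, neg_le_neg_iff, hu]
      have hsq : δ ^ 2 ≤ (r - e) ^ 2 := by
        rw [← sq_abs (r - e)]
        gcongr
      gcongr
    have h2 : Real.exp (-u) ≤ 2 / u ^ 2 := by
      rw [Real.exp_neg, inv_eq_one_div, div_le_div_iff₀ (Real.exp_pos _) (by positivity)]
      have := Real.quadratic_le_exp_of_nonneg hu0.le
      nlinarith
    have h3 : 2 / u ^ 2 = 32 / δ ^ 4 * (t * t) := by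
      rw [hu]; field_simp; norm_num
    have h4 : t = Real.sqrt t * Real.sqrt t := (Real.mul_self_sqrt ht.le).symm
    have h5 : Real.sqrt t ≤ Real.sqrt T := Real.sqrt_le_sqrt htT
    have h6 : t ≤ Real.sqrt T * Real.sqrt t := by nlinarith
    calc Real.exp (-(r - e) ^ 2 / (4 * t)) ≤ 32 / δ ^ 4 * (t * t) := by linarith
      _ ≤ 32 / δ ^ 4 * (t * (Real.sqrt T * Real.sqrt t)) := by gcongr
      _ = _ := by ring

lemma PB_int {r : ℝ} (hr : r ∈ Icc (-1 : ℝ) 1) {e : ℝ} (he : e = 1 ∨ e = -1) {B : ℝ → ℝ}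
    (hB : Continuous B) (a : ℝ) {T : ℝ} (hT : 0 < T) :
    IntervalIntegrable (fun s => P s r e * B (a - s)) volume 0 T := by
  obtain ⟨C, hC, hb, -⟩ := P_bound' hT
  have h1 : IntervalIntegrable (fun s => P s r e) volume 0 T := by
    refine ((inv_sqrt_int T).const_mul C).mono_fun ?_ ?_
    · rw [uIoc_of_le hT.le]
      exact ((P_contOn_s r e).mono (fun s hs => hs.1)).aestronglyMeasurable measurableSet_Ioc
    · rw [uIoc_of_le hT.le]
      filter_upwards [ae_restrict_mem measurableSet_Ioc] with s hs
      rw [Real.norm_eq_abs, abs_of_nonneg (P_nonneg hs.1 _ _)]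
      exact (hb s hs.1 hs.2 r hr e he).trans (le_abs_self _)
  exact h1.mul_continuousOn (by fun_prop)

lemma PB_small {C T M : ℝ}
    (hb : ∀ t, 0 < t → t ≤ T → ∀ r ∈ Icc (-1 : ℝ) 1, ∀ e : ℝ, e = 1 ∨ e = -1 →
      P t r e ≤ C * (Real.sqrt t)⁻¹) {r : ℝ} (hr : r ∈ Icc (-1 : ℝ) 1) {e : ℝ}
    (he : e = 1 ∨ e = -1) {B : ℝ → ℝ}
    (hM : ∀ t, |B t| ≤ M) (a : ℝ) {h : ℝ} (hh : 0 < h) (hhT : h ≤ T) :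
    |∫ s in (0 : ℝ)..h, P s r e * B (a - s)| ≤ 2 * C * M * Real.sqrt h := by
  have h1 := intervalIntegral.norm_integral_le_of_norm_le (μ := volume) (a := 0) (b := h)
    (f := fun s => P s r e * B (a - s)) (g := fun s => C * M * (Real.sqrt s)⁻¹) hh.le
    (Eventually.of_forall fun s hs => by
      rw [norm_mul, Real.norm_eq_abs, Real.norm_eq_abs, abs_of_nonneg (P_nonneg hs.1 _ _)]
      calc P s r e * |B (a - s)| ≤ C * (Real.sqrt s)⁻¹ * M := by
            have := hb s hs.1 (hs.2.trans hhT) r hr e he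
            exact mul_le_mul this (hM _) (abs_nonneg _) ((P_nonneg hs.1 _ _).trans this)
        _ = _ := by ring)
    ((inv_sqrt_int h).const_mul _)
  rw [intervalIntegral.integral_const_mul, inv_sqrt_integral hh.le] at h1
  rw [Real.norm_eq_abs] at h1
  linarith

lemma fub1 {h t : ℝ} (hh : 0 < h) (ht : 0 < t) {r : ℝ} (hr : r ∈ Icc (-1 : ℝ) 1) {w0 : ℝ → ℝ}
    (hm : Measurable w0) (hw : ∀ z ∈ Icc (-1 : ℝ) 1, |w0 z| ≤ 1) :
    IntervalIntegrable (fun z => P h r z * ∫ y in (-1 : ℝ)..1, P t z y * w0 y) volume (-1) 1 ∧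
    ∫ z in (-1 : ℝ)..1, (P h r z * ∫ y in (-1 : ℝ)..1, P t z y * w0 y)
      = ∫ y in (-1 : ℝ)..1, P (t + h) r y * w0 y := by
  have h11 : (-1 : ℝ) ≤ 1 := by norm_num
  obtain ⟨A, hA, hPA⟩ := P_bdd hh
  obtain ⟨A', hA', hPA'⟩ := P_bdd ht
  have hI : IntegrableOn (Function.uncurry fun z y => P h r z * (P t z y * w0 y))
      (uIoc (-1 : ℝ) 1 ×ˢ uIoc (-1 : ℝ) 1) := by
    rw [uIoc_of_le h11]
    refine Measure.integrableOn_of_bounded (M := A * (A' * 1)) ?_ ?_ ?_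
    · rw [Measure.volume_eq_prod, Measure.prod_prod]; simp
      exact (ENNReal.mul_lt_top ENNReal.ofReal_lt_top ENNReal.ofReal_lt_top).ne
    · refine Measurable.aestronglyMeasurable ?_
      exact ((P_cont_y hh r).measurable.comp measurable_fst).mul
        ((P_cont_xy ht).measurable.mul (hm.comp measurable_snd))
    · filter_upwards [ae_restrict_mem (measurableSet_Ioc.prod measurableSet_Ioc)] with p hp
      have h1 := Ioc_subset_Icc_self hp.1
      have h2 := Ioc_subset_Icc_self hp.2
      simp only [Function.uncurry, norm_mul, Real.norm_eq_abs]
      have := hPA r hr _ h1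
      have := hPA' _ h1 _ h2
      have := hw _ h2
      gcongr
  constructor
  · rw [intervalIntegrable_iff]
    have hI2 := hI
    rw [IntegrableOn, Measure.volume_eq_prod, ← Measure.prod_restrict] at hI2
    have := hI2.integral_prod_left
    refine this.congr (Eventually.of_forall fun z => ?_)
    simp only [Function.uncurry]
    rw [integral_const_mul, intervalIntegral.integral_of_le h11, uIoc_of_le h11]
  · simp_rw [← intervalIntegral.integral_const_mul]
    rw [intervalIntegral_intervalIntegral_swap hI]
    refine intervalIntegral.integral_congr fun y _ => ?_
    simp_rw [← mul_assoc]
    rw [intervalIntegral.integral_mul_const, P_CK hh ht, add_comm]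

lemma fub2 {h t : ℝ} (hh : 0 < h) (ht : 0 < t) {r : ℝ} (hr : r ∈ Icc (-1 : ℝ) 1) {e : ℝ}
    (he : e = 1 ∨ e = -1) {B : ℝ → ℝ} (hB : Continuous B) {M : ℝ}
    (hM : ∀ t, |B t| ≤ M) :
    IntervalIntegrable (fun z => P h r z * ∫ s in (0 : ℝ)..t, P s z e * B (t - s)) volume (-1) 1 ∧
    ∫ z in (-1 : ℝ)..1, (P h r z * ∫ s in (0 : ℝ)..t, P s z e * B (t - s))
      = ∫ s in h..(t + h), P s r e * B (t + h - s) := by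
  have h11 : (-1 : ℝ) ≤ 1 := by norm_num
  obtain ⟨A, hA, hPA⟩ := P_bdd hh
  obtain ⟨C, hC, hb, -⟩ := P_bound' ht
  have hI : IntegrableOn (Function.uncurry fun z s => P h r z * (P s z e * B (t - s)))
      (uIoc (-1 : ℝ) 1 ×ˢ uIoc (0 : ℝ) t) := by
    rw [uIoc_of_le h11, uIoc_of_le ht.le]
    have hg : IntegrableOn (fun p : ℝ × ℝ => A * (C * M) * (Real.sqrt p.2)⁻¹)
        (Ioc (-1 : ℝ) 1 ×ˢ Ioc (0 : ℝ) t) := by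
      rw [IntegrableOn, Measure.volume_eq_prod, ← Measure.prod_restrict]
      have h1 : Integrable (fun _ : ℝ => A * (C * M)) (volume.restrict (Ioc (-1 : ℝ) 1)) :=
        integrable_const _
      have h2 := inv_sqrt_int t
      rw [intervalIntegrable_iff, uIoc_of_le ht.le] at h2
      exact h1.mul_prod h2
    refine Integrable.mono' hg ?_ ?_
    · refine ContinuousOn.aestronglyMeasurable ?_ (measurableSet_Ioc.prod measurableSet_Ioc)
      refine ContinuousOn.mul ?_ (ContinuousOn.mul ?_ ?_)
      · exact ((P_cont_y hh r).comp continuous_fst).continuousOn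
      · exact P_cont.comp (f := fun p : ℝ × ℝ => (p.2, p.1, e)) (by fun_prop)
          (fun s hs => ⟨hs.2.1, trivial⟩)
      · fun_prop
    · filter_upwards [ae_restrict_mem (measurableSet_Ioc.prod measurableSet_Ioc)] with p hp
      have h1 := Ioc_subset_Icc_self hp.1
      have h2 := hp.2
      simp only [Function.uncurry, norm_mul, Real.norm_eq_abs]
      have i1 := hPA r hr _ h1
      have i2 := hb _ h2.1 h2.2 _ h1 e he
      have i3 := hM (t - p.2)
      rw [abs_of_nonneg (P_nonneg h2.1 p.1 e)]
      calc |P h r p.1| * (P p.2 p.1 e * |B (t - p.2)|) ≤ A * (C * (Real.sqrt p.2)⁻¹ * M) := by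
            have := P_nonneg h2.1 p.1 e
            gcongr
        _ = _ := by ring
  constructor
  · rw [intervalIntegrable_iff]
    have hI2 := hI
    rw [IntegrableOn, Measure.volume_eq_prod, ← Measure.prod_restrict] at hI2
    have := hI2.integral_prod_left
    refine this.congr (Eventually.of_forall fun z => ?_)
    simp only [Function.uncurry]
    rw [integral_const_mul, intervalIntegral.integral_of_le ht.le, uIoc_of_le ht.le]
  · simp_rw [← intervalIntegral.integral_const_mul]
    rw [intervalIntegral_intervalIntegral_swap hI]
    have := intervalIntegral.integral_comp_add_right (a := 0) (b := t)
      (fun s => P s r e * B (t + h - s)) h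
    rw [zero_add] at this
    rw [← this]
    refine intervalIntegral.integral_congr_ae (Eventually.of_forall fun s hs => ?_)
    rw [uIoc_of_le ht.le] at hs
    simp_rw [← mul_assoc]
    rw [intervalIntegral.integral_mul_const, P_CK hh hs.1, add_comm h s]
    congr 2; ring

/-- The linearised integral equation, restarted at an arbitrary time. -/
lemma restart {w0 : ℝ → ℝ} {w : ℝ → ℝ → ℝ} {B : ℝ → ℝ → ℝ} {M : ℝ}
    (hm : Measurable w0) (hw : ∀ z ∈ Icc (-1 : ℝ) 1, |w0 z| ≤ 1)
    (hB : ∀ e, Continuous (B e)) (hM : ∀ e t, |B e t| ≤ M)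
    (h0 : ∀ r ∈ Icc (-1 : ℝ) 1, w r 0 = w0 r)
    (heq : ∀ t, 0 < t → ∀ r ∈ Icc (-1 : ℝ) 1, w r t = (∫ z in (-1 : ℝ)..1, P t r z * w0 z)
      - (∫ s in (0 : ℝ)..t, P s r 1 * B 1 (t - s)) - ∫ s in (0 : ℝ)..t, P s r (-1) * B (-1) (t - s))
    {t h : ℝ} (ht : 0 ≤ t) (hh : 0 < h) {r : ℝ} (hr : r ∈ Icc (-1 : ℝ) 1) :
    w r (t + h) = (∫ z in (-1 : ℝ)..1, P h r z * w z t)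
      - (∫ s in (0 : ℝ)..h, P s r 1 * B 1 (t + h - s))
      - ∫ s in (0 : ℝ)..h, P s r (-1) * B (-1) (t + h - s) := by
  have h11 : (-1 : ℝ) ≤ 1 := by norm_num
  rcases ht.eq_or_lt with rfl | ht
  · rw [zero_add, heq h hh r hr]
    congr 2
    refine intervalIntegral.integral_congr fun z hz => ?_
    rw [uIcc_of_le h11] at hz
    rw [h0 z hz]
  · obtain ⟨i0, e0⟩ := fub1 hh ht hr hm hw
    obtain ⟨i1, e1⟩ := fub2 hh ht hr (Or.inl rfl : (1 : ℝ) = 1 ∨ (1 : ℝ) = -1) (hB 1) (hM 1)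
    obtain ⟨i2, e2⟩ := fub2 hh ht hr (Or.inr rfl : (-1 : ℝ) = 1 ∨ (-1 : ℝ) = -1) (hB (-1)) (hM (-1))
    have e3 : ∫ z in (-1 : ℝ)..1, P h r z * w z t =
        ∫ z in (-1 : ℝ)..1, ((P h r z * ∫ y in (-1 : ℝ)..1, P t z y * w0 y)
          - (P h r z * ∫ s in (0 : ℝ)..t, P s z 1 * B 1 (t - s))
          - (P h r z * ∫ s in (0 : ℝ)..t, P s z (-1) * B (-1) (t - s))) := by
      refine intervalIntegral.integral_congr fun z hz => ?_
      rw [uIcc_of_le h11] at hz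
      rw [heq t ht z hz]; ring
    rw [e3, intervalIntegral.integral_sub (i0.sub i1) i2, intervalIntegral.integral_sub i0 i1,
      e0, e1, e2, heq (t + h) (by positivity) r hr]
    have hth : 0 < t + h := by positivity
    have split : ∀ e : ℝ, e = 1 ∨ e = -1 → ∫ s in (0 : ℝ)..(t + h), P s r e * B e (t + h - s) =
        (∫ s in (0 : ℝ)..h, P s r e * B e (t + h - s)) +
        ∫ s in h..(t + h), P s r e * B e (t + h - s) := by
      intro e he
      have j1 := PB_int hr he (hB e) (t + h) hth
      have j2 := PB_int hr he (hB e) (t + h) hh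
      exact (intervalIntegral.integral_add_adjacent_intervals j2 (j2.symm.trans j1)).symm
    rw [split 1 (Or.inl rfl), split (-1) (Or.inr rfl)]
    ring

/-- Positivity for the integral equation with dissipative boundary terms. -/
lemma core {w0 : ℝ → ℝ} {w : ℝ → ℝ → ℝ} {B : ℝ → ℝ → ℝ} {M : ℝ}
    (hm : Measurable w0) (hw : ∀ z ∈ Icc (-1 : ℝ) 1, |w0 z| ≤ 1)
    (hw0 : ∀ z ∈ Icc (-1 : ℝ) 1, 0 ≤ w0 z)
    (hB : ∀ e, Continuous (B e)) (hM : ∀ e t, |B e t| ≤ M)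
    (h0 : ∀ r ∈ Icc (-1 : ℝ) 1, w r 0 = w0 r)
    (heq : ∀ t, 0 < t → ∀ r ∈ Icc (-1 : ℝ) 1, w r t = (∫ z in (-1 : ℝ)..1, P t r z * w0 z)
      - (∫ s in (0 : ℝ)..t, P s r 1 * B 1 (t - s)) - ∫ s in (0 : ℝ)..t, P s r (-1) * B (-1) (t - s))
    (hwm : ∀ t, Measurable (fun r => w r t))
    (hw1 : ∀ r ∈ Icc (-1 : ℝ) 1, ∀ t, 0 ≤ t → |w r t| ≤ 1)
    (hwc : ∀ e : ℝ, e = 1 ∨ e = -1 → ContinuousOn (w e) (Ici 0))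
    (hsign : ∀ e : ℝ, e = 1 ∨ e = -1 → ∀ t, 0 ≤ t → w e t ≤ 0 → B e t ≤ 0)
    {T : ℝ} (hT : 0 < T) {r : ℝ} (hr : r ∈ Icc (-1 : ℝ) 1) : 0 ≤ w r T := by
  have h11 : (-1 : ℝ) ≤ 1 := by norm_num
  have hM0 : 0 ≤ M := (abs_nonneg _).trans (hM 0 0)
  have heI : ∀ e : ℝ, e = 1 ∨ e = -1 → e ∈ Icc (-1 : ℝ) 1 := by
    rintro e (rfl | rfl) <;> constructor <;> norm_num
  obtain ⟨C, hC, hb, hfar⟩ := P_bound' hT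
  have hPw : ∀ h, 0 < h → ∀ r t, 0 ≤ t →
      IntervalIntegrable (fun z => P h r z * w z t) volume (-1) 1 := by
    intro h hh r t ht
    have h1 : IntervalIntegrable (fun z => P h r z) volume (-1) 1 :=
      (P_cont_y hh r).intervalIntegrable _ _
    rw [intervalIntegrable_iff] at h1 ⊢
    refine h1.mul_bdd (c := 1) (hwm t).aestronglyMeasurable ?_
    rw [uIoc_of_le h11]
    filter_upwards [ae_restrict_mem measurableSet_Ioc] with z hz
    exact hw1 z (Ioc_subset_Icc_self hz) t ht
  -- it suffices to have a lower bound with arbitrary error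
  refine le_of_forall_pos_le_add fun η' hη' => ?_
  obtain ⟨η, hη, rfl⟩ : ∃ η, 0 < η ∧ η' = 3 * η := ⟨η' / 3, by positivity, by ring⟩
  obtain ⟨τ, hτ, hτT, hτη⟩ : ∃ τ, 0 < τ ∧ τ < T ∧ 8 * C * M * Real.sqrt τ ≤ η / 2 := by
    set x := η / (16 * C * M + 1) with hx
    have hxp : 0 < x := by positivity
    refine ⟨min (T / 2) (x ^ 2), by positivity, (min_le_left _ _).trans_lt (by linarith), ?_⟩
    have h1 : Real.sqrt (min (T / 2) (x ^ 2)) ≤ x := by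
      rw [Real.sqrt_le_left hxp.le]; exact min_le_right _ _
    have h2 : (16 * C * M + 1) * x = η := by rw [hx]; field_simp
    have h3 : 8 * C * M * Real.sqrt (min (T / 2) (x ^ 2)) ≤ 8 * C * M * x := by gcongr
    nlinarith
  -- the initial layer
  have lowbound : ∀ r ∈ Icc (-1 : ℝ) 1, -(2 * η) ≤ w r τ := by
    intro r hr
    rw [heq τ hτ r hr]
    have a0 : 0 ≤ ∫ z in (-1 : ℝ)..1, P τ r z * w0 z :=
      intervalIntegral.integral_nonneg h11 fun z hz => mul_nonneg (P_nonneg hτ _ _) (hw0 z hz)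
    have a1 := (abs_le.1 (PB_small hb hr (Or.inl rfl) (hM 1) τ hτ hτT.le)).2
    have a2 := (abs_le.1 (PB_small hb hr (Or.inr rfl) (hM (-1)) τ hτ hτT.le)).2
    have : 0 ≤ C * M * Real.sqrt τ := by positivity
    linarith
  -- space modulus of continuity at the boundary
  obtain ⟨δ, hδ, hmod⟩ : ∃ δ, 0 < δ ∧ ∀ e : ℝ, e = 1 ∨ e = -1 → ∀ r ∈ Icc (-1 : ℝ) 1,
      |r - e| < δ → ∀ t, τ ≤ t → |w r t - w e t| ≤ η := by
    have huc := (isCompact_Icc.prod isCompact_Icc : IsCompact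
      (Icc (-1 : ℝ) 1 ×ˢ Icc (-1 : ℝ) 1)).uniformContinuousOn_of_continuous
        (P_cont_xy hτ).continuousOn
    rw [Metric.uniformContinuousOn_iff] at huc
    obtain ⟨δ, hδ, hd⟩ := huc (η / 4) (by positivity)
    refine ⟨δ, hδ, fun e he r hr hre t ht => ?_⟩
    have hP : ∀ z ∈ Icc (-1 : ℝ) 1, |P τ r z - P τ e z| ≤ η / 4 := by
      intro z hz
      have := hd (r, z) ⟨hr, hz⟩ (e, z) ⟨heI e he, hz⟩ (by
        rw [Prod.dist_eq]; simpa [Real.dist_eq, hδ] using hre)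
      rw [Real.dist_eq] at this
      exact this.le
    have ht0 : 0 ≤ t - τ := by linarith
    have r1 := restart hm hw hB hM h0 heq ht0 hτ hr
    have r2 := restart hm hw hB hM h0 heq ht0 hτ (heI e he)
    rw [sub_add_cancel] at r1 r2
    have a1 := abs_le.1 (PB_small hb hr (Or.inl rfl) (hM 1) t hτ hτT.le)
    have a2 := abs_le.1 (PB_small hb hr (Or.inr rfl) (hM (-1)) t hτ hτT.le)
    have a3 := abs_le.1 (PB_small hb (heI e he) (Or.inl rfl) (hM 1) t hτ hτT.le)
    have a4 := abs_le.1 (PB_small hb (heI e he) (Or.inr rfl) (hM (-1)) t hτ hτT.le)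
    have a5 : |(∫ z in (-1 : ℝ)..1, P τ r z * w z (t - τ)) -
        ∫ z in (-1 : ℝ)..1, P τ e z * w z (t - τ)| ≤ η / 2 := by
      rw [← intervalIntegral.integral_sub (hPw τ hτ r _ ht0) (hPw τ hτ e _ ht0)]
      have := intervalIntegral.norm_integral_le_of_norm_le_const (a := -1) (b := 1) (C := η / 4)
        (f := fun z => P τ r z * w z (t - τ) - P τ e z * w z (t - τ)) (by
          intro z hz
          rw [uIoc_of_le h11] at hz
          have hz := Ioc_subset_Icc_self hz
          rw [← sub_mul, norm_mul, Real.norm_eq_abs, Real.norm_eq_abs]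
          have i1 := hP z hz
          have i2 := hw1 z hz _ ht0
          calc _ ≤ η / 4 * 1 := by gcongr
            _ = _ := by ring)
      rw [Real.norm_eq_abs] at this
      refine this.trans (le_of_eq ?_)
      norm_num
      ring
    have a6 := abs_le.1 a5
    rw [r1, r2, abs_le]
    constructor <;> linarith [a1.1, a1.2, a2.1, a2.2, a3.1, a3.2, a4.1, a4.2, a6.1, a6.2]
  -- time modulus at the boundary
  obtain ⟨h₀, hh₀, htime⟩ : ∃ h₀, 0 < h₀ ∧ ∀ e : ℝ, e = 1 ∨ e = -1 → ∀ t ∈ Icc 0 T, ∀ t' ∈ Icc 0 T,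
      |t - t'| < h₀ → |w e t - w e t'| < η := by
    have hu : ∀ e : ℝ, e = 1 ∨ e = -1 → ∃ h₀, 0 < h₀ ∧ ∀ t ∈ Icc 0 T, ∀ t' ∈ Icc 0 T,
      |t - t'| < h₀ → |w e t - w e t'| < η := by
      intro e he
      have huc := (isCompact_Icc : IsCompact (Icc 0 T)).uniformContinuousOn_of_continuous
        ((hwc e he).mono fun x hx => hx.1)
      rw [Metric.uniformContinuousOn_iff] at huc
      exact huc η hη
    obtain ⟨h1, hh1, H1⟩ := hu 1 (Or.inl rfl)
    obtain ⟨h2, hh2, H2⟩ := hu (-1) (Or.inr rfl)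
    refine ⟨min h1 h2, lt_min hh1 hh2, ?_⟩
    rintro e (rfl | rfl) t ht t' ht' hd
    · exact H1 t ht t' ht' (hd.trans_le (min_le_left _ _))
    · exact H2 t ht t' ht' (hd.trans_le (min_le_right _ _))
  obtain ⟨C2, hC2, hfar⟩ := hfar δ hδ
  -- a single short step
  have step : ∀ t h A, τ ≤ t → 0 < h → h < h₀ → t + h ≤ T → 2 * η ≤ A →
      (∀ r ∈ Icc (-1 : ℝ) 1, -A ≤ w r t) →
      ∀ r ∈ Icc (-1 : ℝ) 1, -(A + 2 * C2 * M * h ^ 2) ≤ w r (t + h) := by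
    intro t h A ht hh hhh hthT hA hlow r hr
    have hpos : 0 ≤ C2 * M * h ^ 2 := by positivity
    by_cases hcase : -(2 * η) ≤ w r (t + h)
    · linarith
    have hcase := not_le.1 hcase
    have ht0 : 0 ≤ t := by linarith
    rw [restart hm hw hB hM h0 heq ht0 hh hr]
    have bd : ∀ e : ℝ, e = 1 ∨ e = -1 →
        ∫ s in (0 : ℝ)..h, P s r e * B e (t + h - s) ≤ C2 * M * h ^ 2 := by
      intro e he
      have hle : ∀ s ∈ Ioo 0 h, P s r e * B e (t + h - s) ≤ C2 * M * h := by
        intro s hs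
        have hPn := P_nonneg hs.1 r e
        rcases lt_or_ge |r - e| δ with hd | hd
        · have b1 := abs_le.1 (hmod e he r hr hd (t + h) (by linarith))
          have b2 := abs_lt.1 (htime e he (t + h) ⟨by linarith, hthT⟩ (t + h - s)
            ⟨by linarith [hs.2], by linarith [hs.1]⟩ (by
              rw [sub_sub_cancel, abs_of_pos hs.1]; exact hs.2.trans hhh))
          have b3 : B e (t + h - s) ≤ 0 :=
            hsign e he _ (by linarith [hs.2]) (by linarith [b1.1, b1.2, b2.1, b2.2])
          have : 0 ≤ C2 * M * h := by positivity
          linarith [mul_nonpos_of_nonneg_of_nonpos hPn b3]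
        · have b1 := hfar s hs.1 (by linarith [hs.2]) r hr e he hd
          have b2 := (abs_le.1 (hM e (t + h - s))).2
          calc P s r e * B e (t + h - s) ≤ P s r e * M := by gcongr
            _ ≤ C2 * s * M := by gcongr
            _ ≤ C2 * h * M := by
              have := hs.2.le
              gcongr
            _ = _ := by ring
      have := intervalIntegral.integral_mono_on_of_le_Ioo hh.le
        (PB_int hr he (hB e) (t + h) hh) (intervalIntegrable_const (c := C2 * M * h)) hle
      rw [intervalIntegral.integral_const, smul_eq_mul] at this
      nlinarith
    have a1 := bd 1 (Or.inl rfl)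
    have a2 := bd (-1) (Or.inr rfl)
    have a0 : -A ≤ ∫ z in (-1 : ℝ)..1, P h r z * w z t := by
      have i1 : ∫ z in (-1 : ℝ)..1, P h r z * (-A) = -A := by
        rw [intervalIntegral.integral_mul_const, P_mass hh, one_mul]
      rw [← i1]
      refine intervalIntegral.integral_mono_on h11 ?_ (hPw h hh r t ht0) ?_
      · exact ((P_cont_y hh r).mul continuous_const).intervalIntegrable _ _
      · intro z hz
        exact mul_le_mul_of_nonneg_left (hlow z hz) (P_nonneg hh _ _)
    linarith
  -- iterate
  obtain ⟨n, hn⟩ := exists_nat_gt (max ((T - τ) / h₀) (2 * C2 * M * (T - τ) ^ 2 / η))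
  have hn1 : (T - τ) / h₀ < n := (le_max_left _ _).trans_lt hn
  have hn2 : 2 * C2 * M * (T - τ) ^ 2 / η < n := (le_max_right _ _).trans_lt hn
  have hTτ : 0 < T - τ := by linarith
  have hn0 : (0 : ℝ) < n := (by positivity : 0 < (T - τ) / h₀).trans hn1
  set h := (T - τ) / n with hh
  have hhp : 0 < h := by positivity
  have hnh : n * h = T - τ := by rw [hh]; field_simp
  have hhh : h < h₀ := by
    rw [hh, div_lt_iff₀ hn0]
    rw [div_lt_iff₀ hh₀] at hn1
    linarith
  have iter : ∀ k : ℕ, k ≤ n → ∀ r ∈ Icc (-1 : ℝ) 1,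
      -(2 * η + k * (2 * C2 * M * h ^ 2)) ≤ w r (τ + k * h) := by
    intro k
    induction k with
    | zero => intro _ r hr; simpa using lowbound r hr
    | succ k ih =>
      intro hk r hr
      have hk' : ((k : ℝ) + 1) ≤ n := by exact_mod_cast hk
      have := step (τ + k * h) h (2 * η + k * (2 * C2 * M * h ^ 2))
        (by have : 0 ≤ (k : ℝ) * h := by positivity
            linarith) hhp hhh
        (by nlinarith) (by have : 0 ≤ (k : ℝ) * (2 * C2 * M * h ^ 2) := by positivity
                           linarith) (ih (by omega)) r hr
      push_cast
      rw [show τ + ((k : ℝ) + 1) * h = τ + k * h + h by ring]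
      linarith
  have hfin := iter n le_rfl r hr
  rw [hnh, show τ + (T - τ) = T by ring] at hfin
  have herr : n * (2 * C2 * M * h ^ 2) ≤ η := by
    have e1 : n * (2 * C2 * M * h ^ 2) = 2 * C2 * M * (T - τ) ^ 2 / n := by
      rw [hh]; field_simp
    rw [e1, div_le_iff₀ hn0]
    rw [div_lt_iff₀ hη] at hn2
    linarith
  linarith

/-- Monotonicity of the macroscopic equation: if `ρ₀ ≤ σ₀` on `[−1,1]` and `ρ`, `σ`
are solutions of the macroscopic integral equation with initial data `ρ₀`, `σ₀`
respectively, having continuous boundary traces, then `ρ(r,t) ≤ σ(r,t)` for all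
`r ∈ [−1,1]` and `t ≥ 0`. -/
theorem macro_monotone (j : ℝ) (hj : 0 < j) (K : ℕ) (hK : 1 ≤ K)
    (ρ₀ σ₀ : ℝ → ℝ) (hρ₀m : Measurable ρ₀) (hσ₀m : Measurable σ₀)
    (hρ₀01 : ∀ r ∈ Set.Icc (-1 : ℝ) 1, ρ₀ r ∈ Set.Icc (0 : ℝ) 1)
    (hσ₀01 : ∀ r ∈ Set.Icc (-1 : ℝ) 1, σ₀ r ∈ Set.Icc (0 : ℝ) 1)
    (hle : ∀ r ∈ Set.Icc (-1 : ℝ) 1, ρ₀ r ≤ σ₀ r)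
    (ρ σ : ℝ → ℝ → ℝ)
    (hρ : IsMacroSolution j K ρ₀ ρ) (hσ : IsMacroSolution j K σ₀ σ)
    (hρbp : ContinuousOn (fun t => ρ 1 t) (Set.Ici (0 : ℝ)))
    (hρbm : ContinuousOn (fun t => ρ (-1) t) (Set.Ici (0 : ℝ)))
    (hσbp : ContinuousOn (fun t => σ 1 t) (Set.Ici (0 : ℝ)))
    (hσbm : ContinuousOn (fun t => σ (-1) t) (Set.Ici (0 : ℝ))) :
    ∀ r ∈ Set.Icc (-1 : ℝ) 1, ∀ t : ℝ, 0 ≤ t → ρ r t ≤ σ r t := by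
  obtain ⟨hρm, hρ01, hρ0, hρe⟩ := hρ
  obtain ⟨hσm, hσ01, hσ0, hσe⟩ := hσ
  have I1 : (1 : ℝ) ∈ Set.Icc (-1 : ℝ) 1 := by constructor <;> norm_num
  have I2 : (-1 : ℝ) ∈ Set.Icc (-1 : ℝ) 1 := by constructor <;> norm_num
  intro r hr T hT
  rcases hT.eq_or_lt with rfl | hT
  · rw [hρ0 r hr, hσ0 r hr]; exact hle r hr
  have ext : ∀ f : ℝ → ℝ, ContinuousOn f (Set.Ici 0) → Continuous (fun t => f (max t 0)) :=
    fun f hf => hf.comp_continuous (by fun_prop) (fun t => Set.mem_Ici.2 (le_max_right _ _))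
  have c1 := ext _ hρbp
  have c2 := ext _ hρbm
  have c3 := ext _ hσbp
  have c4 := ext _ hσbm
  set f1 : ℝ → ℝ := fun t => 1 - (ρ 1 (max t 0)) ^ K with hf1
  set f2 : ℝ → ℝ := fun t => 1 - (1 - ρ (-1) (max t 0)) ^ K with hf2
  set g1 : ℝ → ℝ := fun t => 1 - (σ 1 (max t 0)) ^ K with hg1
  set g2 : ℝ → ℝ := fun t => 1 - (1 - σ (-1) (max t 0)) ^ K with hg2
  have cf1 : Continuous f1 := continuous_const.sub (c1.pow K)
  have cf2 : Continuous f2 := continuous_const.sub ((continuous_const.sub c2).pow K)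
  have cg1 : Continuous g1 := continuous_const.sub (c3.pow K)
  have cg2 : Continuous g2 := continuous_const.sub ((continuous_const.sub c4).pow K)
  have b01 : ∀ x : ℝ, x ∈ Set.Icc (0 : ℝ) 1 → 1 - x ^ K ∈ Set.Icc (0 : ℝ) 1 := fun x hx =>
    ⟨by linarith [pow_le_one₀ (n := K) hx.1 hx.2], by linarith [pow_nonneg hx.1 K]⟩
  have m01 : ∀ x : ℝ, x ∈ Set.Icc (0 : ℝ) 1 → 1 - x ∈ Set.Icc (0 : ℝ) 1 := fun x hx =>
    ⟨by linarith [hx.2], by linarith [hx.1]⟩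
  have bf1 : ∀ t, f1 t ∈ Set.Icc (0 : ℝ) 1 := fun t => b01 _ (hρ01 1 I1 _ (le_max_right _ _))
  have bf2 : ∀ t, f2 t ∈ Set.Icc (0 : ℝ) 1 := fun t =>
    b01 _ (m01 _ (hρ01 (-1) I2 _ (le_max_right _ _)))
  have bg1 : ∀ t, g1 t ∈ Set.Icc (0 : ℝ) 1 := fun t => b01 _ (hσ01 1 I1 _ (le_max_right _ _))
  have bg2 : ∀ t, g2 t ∈ Set.Icc (0 : ℝ) 1 := fun t =>
    b01 _ (m01 _ (hσ01 (-1) I2 _ (le_max_right _ _)))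
  have n1 : (-1 : ℝ) ≠ 1 := by norm_num
  set B : ℝ → ℝ → ℝ := fun e t => if e = 1 then j / 2 * (f1 t - g1 t) else j / 2 * (g2 t - f2 t)
    with hB
  have hB1 : ∀ t, B 1 t = j / 2 * (f1 t - g1 t) := fun t => by simp [hB]
  have hB2 : ∀ t, B (-1) t = j / 2 * (g2 t - f2 t) := fun t => by simp [hB, n1]
  -- both equations, with globally continuous boundary data
  have solve : ∀ (u₀ : ℝ → ℝ) (u : ℝ → ℝ → ℝ) (k1 k2 : ℝ → ℝ), Continuous k1 → Continuous k2 →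
      (∀ t, 0 ≤ t → k1 t = 1 - (u 1 t) ^ K) → (∀ t, 0 ≤ t → k2 t = 1 - (1 - u (-1) t) ^ K) →
      (∀ t : ℝ, 0 < t → ∀ r ∈ Set.Icc (-1 : ℝ) 1,
        u r t = (∫ r' in (-1 : ℝ)..1, P t r r' * u₀ r')
          + j / 2 * ∫ s in (0 : ℝ)..t,
            (P s r 1 * (1 - (u 1 (t - s)) ^ K)
              - P s r (-1) * (1 - (1 - u (-1) (t - s)) ^ K))) →
      ∀ t : ℝ, 0 < t → ∀ r ∈ Set.Icc (-1 : ℝ) 1,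
        u r t = (∫ r' in (-1 : ℝ)..1, P t r r' * u₀ r')
          + j / 2 * ((∫ s in (0 : ℝ)..t, P s r 1 * k1 (t - s))
            - ∫ s in (0 : ℝ)..t, P s r (-1) * k2 (t - s)) := by
    intro u₀ u k1 k2 hk1 hk2 e1 e2 hu t ht r hr
    rw [hu t ht r hr, ← intervalIntegral.integral_sub (PB_int hr (Or.inl rfl) hk1 t ht)
      (PB_int hr (Or.inr rfl) hk2 t ht)]
    congr 2
    refine intervalIntegral.integral_congr fun s hs => ?_
    rw [uIcc_of_le ht.le] at hs
    have hts : 0 ≤ t - s := by linarith [hs.2]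
    simp only [e1 _ hts, e2 _ hts]
  have sρ := solve ρ₀ ρ f1 f2 cf1 cf2 (fun t ht => by simp only [hf1, max_eq_left ht])
    (fun t ht => by simp only [hf2, max_eq_left ht]) hρe
  have sσ := solve σ₀ σ g1 g2 cg1 cg2 (fun t ht => by simp only [hg1, max_eq_left ht])
    (fun t ht => by simp only [hg2, max_eq_left ht]) hσe
  have key : 0 ≤ (fun r t => σ r t - ρ r t) r T := by
    refine core (w0 := fun z => σ₀ z - ρ₀ z) (w := fun r t => σ r t - ρ r t) (B := B) (M := j / 2) (hσ₀m.sub hρ₀m) ?_ ?_ ?_ ?_ ?_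
      ?_ ?_ ?_ ?_ ?_ hT hr
    · intro z hz
      have h1 := hρ₀01 z hz
      have h2 := hσ₀01 z hz
      rw [abs_le]; constructor <;> linarith [h1.1, h1.2, h2.1, h2.2]
    · intro z hz; linarith [hle z hz]
    · intro e
      by_cases he : e = 1
      · simp only [hB, he, if_true]; fun_prop
      · simp only [hB, he, if_false]; fun_prop
    · intro e t
      have h1 := bf1 t
      have h2 := bf2 t
      have h3 := bg1 t
      have h4 := bg2 t
      simp only [hB]
      split_ifs
      · rw [abs_mul, abs_of_pos (by positivity : 0 < j / 2)]
        have : |f1 t - g1 t| ≤ 1 := by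
          rw [abs_le]; constructor <;> linarith [h1.1, h1.2, h3.1, h3.2]
        nlinarith
      · rw [abs_mul, abs_of_pos (by positivity : 0 < j / 2)]
        have : |g2 t - f2 t| ≤ 1 := by
          rw [abs_le]; constructor <;> linarith [h2.1, h2.2, h4.1, h4.2]
        nlinarith
    · intro r hr; simp only [hσ0 r hr, hρ0 r hr]
    · intro t ht r hr
      have int0 : ∀ u₀ : ℝ → ℝ, Measurable u₀ →
          (∀ r ∈ Set.Icc (-1 : ℝ) 1, u₀ r ∈ Set.Icc (0 : ℝ) 1) →
          IntervalIntegrable (fun z => P t r z * u₀ z) volume (-1) 1 := by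
        intro u₀ hu hu1
        have h1 : IntervalIntegrable (fun z => P t r z) volume (-1) 1 :=
          (P_cont_y ht r).intervalIntegrable _ _
        rw [intervalIntegrable_iff] at h1 ⊢
        refine h1.mul_bdd (c := 1) hu.aestronglyMeasurable ?_
        rw [uIoc_of_le (by norm_num)]
        filter_upwards [ae_restrict_mem measurableSet_Ioc] with z hz
        have := hu1 z (Ioc_subset_Icc_self hz)
        rw [Real.norm_eq_abs, abs_of_nonneg this.1]; exact this.2
      simp_rw [hB1, hB2, mul_sub]
      rw [intervalIntegral.integral_sub (int0 σ₀ hσ₀m hσ₀01) (int0 ρ₀ hρ₀m hρ₀01)]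
      rw [intervalIntegral.integral_sub (PB_int hr (Or.inl rfl) (cf1.const_mul (j / 2)) t ht)
        (PB_int hr (Or.inl rfl) (cg1.const_mul (j / 2)) t ht),
        intervalIntegral.integral_sub (PB_int hr (Or.inr rfl) (cg2.const_mul (j / 2)) t ht)
        (PB_int hr (Or.inr rfl) (cf2.const_mul (j / 2)) t ht), sρ t ht r hr, sσ t ht r hr]
      have pull : ∀ (e : ℝ) (k : ℝ → ℝ), ∫ s in (0 : ℝ)..t, P s r e * (j / 2 * k (t - s)) =
          j / 2 * ∫ s in (0 : ℝ)..t, P s r e * k (t - s) := by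
        intro e k
        rw [← intervalIntegral.integral_const_mul]
        refine intervalIntegral.integral_congr fun s _ => ?_
        ring
      rw [pull, pull, pull, pull]
      ring
    · intro t
      exact (hσm.comp measurable_prodMk_right).sub (hρm.comp measurable_prodMk_right)
    · intro z hz t ht
      have h1 := hρ01 z hz t ht
      have h2 := hσ01 z hz t ht
      rw [abs_le]; constructor <;> linarith [h1.1, h1.2, h2.1, h2.2]
    · rintro e (rfl | rfl)
      · exact hσbp.sub hρbp
      · exact hσbm.sub hρbm
    · rintro e (rfl | rfl) t ht hw
      · rw [hB1]
        simp only [hf1, hg1, max_eq_left ht]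
        have := pow_le_pow_left₀ (hσ01 1 I1 t ht).1 (by linarith : σ 1 t ≤ ρ 1 t) K
        exact mul_nonpos_of_nonneg_of_nonpos (by positivity) (by linarith)
      · rw [hB2]
        simp only [hf2, hg2, max_eq_left ht]
        have := pow_le_pow_left₀ (m01 _ (hρ01 (-1) I2 t ht)).1
          (by linarith : 1 - ρ (-1) t ≤ 1 - σ (-1) t) K
        exact mul_nonpos_of_nonneg_of_nonpos (by positivity) (by linarith)
  have key' : 0 ≤ σ r T - ρ r T := key
  linarith
end
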